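/- Let G be a graph with minimum degree at least 2 and at most three vertices of degree 2, and suppose G contains no cycle of length divisible by 3 and no two degree-2 vertices that are adjacent or share both neighbors. If G is 2-connected, then G contains a cycle of length divisible by 3 — i.e., every 2-connected graph without a (0 mod 3)-cycle contains either two adjacent degree-2 vertices or two degree-2 vertices with the same neighborhood. -/

import Mathlib

/-!
Generalize from simple graphs to graphs with nonzero edge labels in `ZMod 3`, the cycles of length
divisible by `3` becoming the cycles of label sum `0`. A vertex of degree two whose two labels agree
can then be suppressed, and the subdivision of an edge becomes a change of its label, so that a
minimal counterexample can be reduced by local operations. Both sides of a 2-cut carry paths of two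
different label sums, which combine to a zero cycle; so a minimal counterexample is 3-connected.
Deleting an edge leaves a smaller counterexample unless one of its ends has degree three and the
other two edges there have different labels or lie in a triangle. Following at each vertex an edge
that avoids the first obstruction leads to an edge that avoids it at both ends, hence to a triangle;
then the edges leaving this triangle can be deleted, or paths along them contracted.
-/

/-- A simple graph whose edges carry nonzero labels in `ZMod 3`; the label `0` encodes
non-adjacency. -/
@[ext]
structure LabelledGraph (V : Type*) where
  label : V → V → ZMod 3
  label_comm (u v : V) : label u v = label v u
  label_self (v : V) : label v v = 0

namespace LabelledGraph

variable {V : Type*} {G H : LabelledGraph V} {a b c d o p q u v w x y z : V} {S U W X t : Set V}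
  {e r s : ZMod 3}

/-- Two vertices are adjacent when their label is nonzero. -/
abbrev Adj (G : LabelledGraph V) (u v : V) : Prop := G.label u v ≠ 0

theorem Adj.symm (h : G.Adj a b) : G.Adj b a := by rwa [Adj, G.label_comm]

theorem Adj.congr (h : G.Adj a b) (hlabel : G.label a b = H.label c d) : H.Adj c d := by
  rwa [Adj, ← hlabel]

theorem Adj.ne (h : G.Adj a b) : a ≠ b := by
  rintro rfl
  exact h (G.label_self a)

/-- `G.HasPath a b U s`: some path of `G` from `a` to `b` has vertex set `U` and label sum `s`. -/
inductive HasPath (G : LabelledGraph V) : V → V → Set V → ZMod 3 → Prop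
  | nil (a : V) : HasPath G a a {a} 0
  | cons {a b c : V} {U : Set V} {s : ZMod 3} (hab : G.Adj a b) (ha : a ∉ U)
      (p : HasPath G b c U s) : HasPath G a c (insert a U) (G.label a b + s)

namespace HasPath

theorem start_mem (p : G.HasPath a b U s) : a ∈ U := by
  cases p <;> simp

theorem end_mem (p : G.HasPath a b U s) : b ∈ U := by
  induction p <;> simp_all

theorem congr (p : G.HasPath a b U s)
    (h : ∀ u ∈ U, ∀ v ∈ U, G.Adj u v → G.label u v = H.label u v) : H.HasPath a b U s := by
  induction p with
  | nil a => exact nil a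
  | @cons a b c U s hab ha p ih =>
    have hlabel := h a (.inl rfl) b (.inr p.start_mem) hab
    rw [hlabel]
    exact cons (hab.congr hlabel) ha (ih fun u hu v hv ↦ h u (.inr hu) v (.inr hv))

theorem append (p : G.HasPath a b U s) (hbc : G.Adj b c) (q : G.HasPath c d W r)
    (h : Disjoint U W) : G.HasPath a d (U ∪ W) (s + G.label b c + r) := by
  induction p with
  | nil a =>
    rw [zero_add]
    exact cons hbc (Set.disjoint_singleton_left.1 h) q
  | @cons a b' b U s hab ha _ ih =>
    rw [Set.disjoint_insert_left] at h
    have := cons hab (by simp [ha, h.1]) (ih hbc h.2)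
    rw [Set.insert_union]
    convert this using 1
    ring

theorem concat (p : G.HasPath a b U s) (hbc : G.Adj b c) (hc : c ∉ U) :
    G.HasPath a c (insert c U) (s + G.label b c) := by
  simpa using p.append hbc (nil c) (by simpa using hc)

theorem reverse (p : G.HasPath a b U s) : G.HasPath b a U s := by
  induction p with
  | nil a => exact nil a
  | @cons a b c U s hab ha p ih =>
    rw [G.label_comm, add_comm]
    exact ih.concat hab.symm ha

theorem cons_cases (p : G.HasPath a b U s) :
    (a = b ∧ U = {a} ∧ s = 0) ∨ ∃ c W r, G.Adj a c ∧ a ∉ W ∧ G.HasPath c b W r ∧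
      U = insert a W ∧ s = G.label a c + r := by
  cases p with
  | nil => simp
  | cons hab ha p => exact .inr ⟨_, _, _, hab, ha, p, rfl, rfl⟩

theorem concat_cases (p : G.HasPath a b U s) :
    (a = b ∧ U = {a} ∧ s = 0) ∨ ∃ c W r, G.Adj c b ∧ b ∉ W ∧ G.HasPath a c W r ∧
      U = insert b W ∧ s = r + G.label c b := by
  obtain ⟨rfl, hU, hs⟩ | ⟨c, W, r, hbc, hb, p, hU, hs⟩ := p.reverse.cons_cases
  · exact .inl ⟨rfl, hU, hs⟩
  · exact .inr ⟨c, W, r, hbc.symm, hb, p.reverse, hU, by rw [hs, G.label_comm, add_comm]⟩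

theorem exists_split (p : G.HasPath a b U s) (hx : x ∈ U) :
    ∃ U₁ U₂ s₁ s₂, G.HasPath a x U₁ s₁ ∧ G.HasPath x b U₂ s₂ ∧ U = U₁ ∪ U₂ ∧
      U₁ ∩ U₂ ⊆ {x} ∧ s = s₁ + s₂ := by
  induction p with
  | nil a =>
    obtain rfl : x = a := hx
    exact ⟨{x}, {x}, 0, 0, nil x, nil x, by simp⟩
  | @cons a b c U s hab ha p ih =>
    obtain rfl | hx := hx
    · exact ⟨{x}, insert x U, 0, _, nil x, cons hab ha p, by simp⟩
    · obtain ⟨U₁, U₂, s₁, s₂, p₁, p₂, rfl, hU, rfl⟩ := ih hx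
      rw [Set.mem_union, not_or] at ha
      refine ⟨insert a U₁, U₂, _, s₂, cons hab ha.1 p₁, p₂, Set.insert_union.symm, ?_, by ring⟩
      rwa [Set.insert_inter_of_notMem ha.2]

end HasPath

/-- No cycle of `G` has label sum `0`. A cycle is a path closed by an edge; there is no need to
exclude the closed walks of length two, as their sum is twice a nonzero label. -/
def ZeroCycleFree (G : LabelledGraph V) : Prop :=
  ∀ ⦃a b U s⦄, G.HasPath a b U s → G.Adj b a → s + G.label b a ≠ 0

/-- `H ≤ G`: the labelled graph `H` is a subgraph of `G`. -/
instance : LE (LabelledGraph V) where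
  le H G := ∀ ⦃u v⦄, H.Adj u v → H.label u v = G.label u v

theorem Adj.mono (h : H.Adj a b) (hle : H ≤ G) : G.Adj a b := h.congr (hle h)

theorem HasPath.mono (p : H.HasPath a b U s) (hle : H ≤ G) : G.HasPath a b U s :=
  p.congr fun _ _ _ _ h ↦ hle h

theorem HasPath.exists_rotate (p : G.HasPath a b U s) (hba : G.Adj b a) (hx : x ∈ U) :
    ∃ c W r, G.HasPath x c W r ∧ G.Adj c x ∧ r + G.label c x = s + G.label b a := by
  obtain ⟨U₁, U₂, s₁, s₂, p₁, p₂, rfl, hU, rfl⟩ := p.exists_split hx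
  obtain ⟨rfl, rfl, rfl⟩ | ⟨c, W, r, hcx, hxW, q, rfl, rfl⟩ := p₁.concat_cases
  · exact ⟨b, _, _, p, hba, rfl⟩
  · have hdisj : Disjoint U₂ W := by
      refine Set.disjoint_left.2 fun v hv₂ hv ↦ hxW ?_
      obtain rfl : v = x := hU ⟨.inr hv, hv₂⟩
      exact hv
    exact ⟨c, _, _, p₂.append hba q hdisj, hcx, by ring⟩

theorem two_mul_label_ne_zero : ∀ t : ZMod 3, t ≠ 0 → t + t ≠ 0 := by decide

namespace ZeroCycleFree

theorem anti (hG : G.ZeroCycleFree) (hle : H ≤ G) : H.ZeroCycleFree := fun _ _ _ _ p hba ↦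
  hle hba ▸ hG (p.mono hle) (hba.mono hle)

theorem triangle (hG : G.ZeroCycleFree) (hab : G.Adj a b) (hbc : G.Adj b c) (hca : G.Adj c a) :
    G.label a b + G.label b c + G.label c a ≠ 0 := by
  have p := HasPath.cons hab (U := {b, c}) (by simp [hab.ne, hca.ne.symm])
    (.cons hbc (by simp [hbc.ne]) (.nil c))
  simpa [add_assoc] using hG p hca

theorem square (hG : G.ZeroCycleFree) (hab : G.Adj a b) (hbc : G.Adj b c) (hcd : G.Adj c d)
    (hda : G.Adj d a) (hac : a ≠ c) (hbd : b ≠ d) :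
    G.label a b + G.label b c + G.label c d + G.label d a ≠ 0 := by
  have p := HasPath.cons hab (U := {b, c, d}) (by simp [hab.ne, hac, hda.ne.symm])
    (.cons hbc (by simp [hbc.ne, hbd]) (.cons hcd (by simp [hcd.ne]) (.nil d)))
  simpa [add_assoc] using hG p hda

theorem pentagon {e : V} (hG : G.ZeroCycleFree) (hab : G.Adj a b) (hbc : G.Adj b c)
    (hcd : G.Adj c d) (hde : G.Adj d e) (hea : G.Adj e a) (h : [a, b, c, d, e].Nodup) :
    G.label a b + G.label b c + G.label c d + G.label d e + G.label e a ≠ 0 := by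
  simp only [List.nodup_cons, List.mem_cons, List.not_mem_nil, or_false, not_or] at h
  have p := HasPath.cons hab (U := {b, c, d, e}) (by simp; tauto)
    (.cons hbc (by simp; tauto) (.cons hcd (by simp; tauto) (.cons hde (by simp; tauto) (.nil e))))
  simpa [add_assoc] using hG p hea

theorem of_agree_off (hG : G.ZeroCycleFree) (x : V)
    (hoff : ∀ u v, u ≠ x → v ≠ x → H.Adj u v → H.label u v = G.label u v)
    (hcyc : ∀ a b W s, H.Adj x a → H.Adj b x → a ≠ b → x ∉ W → H.HasPath a b W s →
      G.HasPath a b W s → H.label x a + s + H.label b x ≠ 0) : H.ZeroCycleFree := by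
  have hcongr {a b W s} (p : H.HasPath a b W s) (hx : x ∉ W) : G.HasPath a b W s :=
    p.congr fun u hu v hv ↦ hoff u v (ne_of_mem_of_not_mem hu hx) (ne_of_mem_of_not_mem hv hx)
  intro a b U s p hba
  by_cases hx : x ∈ U
  · obtain ⟨c, _, r, p, hcx, heq⟩ := p.exists_rotate hba hx
    rw [← heq]
    obtain ⟨rfl, -⟩ | ⟨d, W, r, hxd, hxW, q, rfl, rfl⟩ := p.cons_cases
    · exact absurd rfl hcx.ne
    obtain rfl | hdc := eq_or_ne d c
    · obtain ⟨-, -, rfl⟩ | ⟨_, _, _, -, hc, q, -⟩ := q.cons_cases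
      · rw [H.label_comm x, add_zero]
        exact two_mul_label_ne_zero _ hcx
      · exact absurd q.end_mem hc
    · exact hcyc d c W r hxd hcx hdc hxW q (hcongr q hxW)
  · have hlabel := hoff b a (ne_of_mem_of_not_mem p.end_mem hx)
      (ne_of_mem_of_not_mem p.start_mem hx) hba
    rw [hlabel]
    exact hG (hcongr p hx) (hba.congr hlabel)

end ZeroCycleFree

/-- The neighbourhood of a vertex. -/
def neighborSet (G : LabelledGraph V) (v : V) : Set V := {u | G.Adj v u}

/-- The number of neighbours of a vertex. -/
noncomputable def degree (G : LabelledGraph V) (v : V) : ℕ := (G.neighborSet v).ncard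

/-- The set of non-isolated vertices. Deleting a vertex of a graph isolates it, so that all graphs
of an induction live on the same type, and the support plays the role of the vertex set. -/
def support (G : LabelledGraph V) : Set V := {v | ∃ u, G.Adj v u}

theorem mem_neighborSet : u ∈ G.neighborSet v ↔ G.Adj v u := Iff.rfl

theorem Adj.left_mem_support (h : G.Adj a b) : a ∈ G.support := ⟨b, h⟩

theorem Adj.right_mem_support (h : G.Adj a b) : b ∈ G.support := ⟨a, h.symm⟩

theorem HasPath.subset_support (p : G.HasPath a b U s) (hab : a ≠ b) : U ⊆ G.support := by
  induction p with
  | nil a => exact absurd rfl hab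
  | @cons a b c U s hadj _ p ih =>
    refine Set.insert_subset hadj.left_mem_support ?_
    obtain rfl | hbc := eq_or_ne b c
    · obtain ⟨-, rfl, -⟩ | ⟨_, _, _, -, hb, q, -⟩ := p.cons_cases
      · simpa using hadj.right_mem_support
      · exact absurd q.end_mem hb
    · exact ih hbc

section Operations

open Classical in
/-- Give the edge `xy` the label `e`: this adds or relabels the edge if `e ≠ 0` and deletes it
if `e = 0`. Nothing happens if `x = y`. -/
noncomputable def setEdge (G : LabelledGraph V) (x y : V) (e : ZMod 3) : LabelledGraph V where
  label u v := if x ≠ y ∧ (u = x ∧ v = y ∨ u = y ∧ v = x) then e else G.label u v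
  label_comm u v := by grind [G.label_comm u v]
  label_self v := by grind [G.label_self v]

open Classical in
/-- The subgraph of `G` induced by `s`, with the vertices outside `s` isolated. -/
noncomputable def induce (G : LabelledGraph V) (s : Set V) : LabelledGraph V where
  label u v := if u ∈ s ∧ v ∈ s then G.label u v else 0
  label_comm u v := by grind [G.label_comm u v]
  label_self v := by grind [G.label_self v]

/-- The part of `G` on `s` together with an edge `ab` of label `e`, which stands for the part of
`G` outside `s`. -/
noncomputable def torso (G : LabelledGraph V) (s : Set V) (a b : V) (e : ZMod 3) :
    LabelledGraph V :=
  (G.induce s).setEdge a b e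

open Classical in
theorem setEdge_label (G : LabelledGraph V) (x y : V) (e : ZMod 3) (u v : V) :
    (G.setEdge x y e).label u v =
      if x ≠ y ∧ (u = x ∧ v = y ∨ u = y ∧ v = x) then e else G.label u v := rfl

open Classical in
theorem induce_label (G : LabelledGraph V) (t : Set V) (u v : V) :
    (G.induce t).label u v = if u ∈ t ∧ v ∈ t then G.label u v else 0 := rfl

open Classical in
theorem torso_label (G : LabelledGraph V) (t : Set V) (a b : V) (e : ZMod 3) (u v : V) :
    (G.torso t a b e).label u v =
      if a ≠ b ∧ (u = a ∧ v = b ∨ u = b ∧ v = a) then e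
      else if u ∈ t ∧ v ∈ t then G.label u v else 0 := rfl

theorem setEdge_label_self (hxy : x ≠ y) : (G.setEdge x y e).label x y = e := by
  simp [setEdge_label, hxy]

theorem setEdge_setEdge (G : LabelledGraph V) (x y : V) (e e' : ZMod 3) :
    (G.setEdge x y e).setEdge x y e' = G.setEdge x y e' := by
  ext u v
  grind [setEdge_label]

theorem setEdge_comm (G : LabelledGraph V) (x y : V) (e : ZMod 3) :
    G.setEdge x y e = G.setEdge y x e := by
  ext u v
  grind [setEdge_label]

theorem setEdge_zero_le (G : LabelledGraph V) (x y : V) : G.setEdge x y 0 ≤ G := by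
  intro u v h
  grind [setEdge_label]

theorem induce_le (G : LabelledGraph V) (t : Set V) : G.induce t ≤ G := by
  intro u v h
  grind [induce_label]

theorem induce_support_subset (G : LabelledGraph V) (t : Set V) : (G.induce t).support ⊆ t := by
  rintro v ⟨u, h⟩
  grind [induce_label]

theorem setEdge_induce_compl_singleton (G : LabelledGraph V) (x y : V) (e : ZMod 3) :
    (G.setEdge x y e).induce {x}ᶜ = G.induce {x}ᶜ := by
  ext u v
  grind [setEdge_label, induce_label]

theorem ZeroCycleFree.setEdge (hG : G.ZeroCycleFree)
    (hpath : ∀ U s, G.HasPath x y U s → e + s ≠ 0) : (G.setEdge x y e).ZeroCycleFree := by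
  have hoff {u v} (h : ¬(u = x ∧ v = y)) (h' : ¬(u = y ∧ v = x)) :
      (G.setEdge x y e).label u v = G.label u v := by grind [setEdge_label]
  refine hG.of_agree_off x (fun u v hu hv _ ↦ hoff (by tauto) (by tauto)) ?_
  intro a b W s hxa hbx hab hxW _ p
  have hlabel {v} (hvx : (G.setEdge x y e).Adj v x) (hvy : v ≠ y) :
      (G.setEdge x y e).label v x = G.label v x :=
    hoff (fun h ↦ hvx.ne h.1) (fun h ↦ hvy h.1)
  obtain rfl | hay := eq_or_ne a y
  · rw [hlabel hbx hab.symm, setEdge_label_self hxa.ne, add_assoc]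
    exact hpath _ _ (p.concat (hbx.congr (hlabel hbx hab.symm)) hxW).reverse
  have hax := hxa.symm.congr (hlabel hxa.symm hay)
  rw [label_comm, hlabel hxa.symm hay, G.label_comm]
  obtain rfl | hby := eq_or_ne b y
  · rw [label_comm _ b x, setEdge_label_self hbx.ne.symm, add_comm]
    exact hpath _ _ (.cons hax.symm hxW p)
  · rw [hlabel hbx hby]
    exact hG (.cons hax.symm hxW p) (hbx.congr (hlabel hbx hby))

end Operations

section Connectivity

/-- `S` is closed under passing to neighbours in the graph obtained from `G` by deleting `X`. -/
def ClosedAvoiding (G : LabelledGraph V) (X S : Set V) : Prop :=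
  ∀ ⦃u v⦄, u ∉ X → v ∉ X → u ∈ S → G.Adj u v → v ∈ S

/-- The graph obtained from `G` by deleting `X` is connected: no nonempty proper subset of its
vertices is closed under passing to neighbours. -/
def ConnectedAvoiding (G : LabelledGraph V) (X : Set V) : Prop :=
  ∀ ⦃S⦄, G.ClosedAvoiding X S → ∀ ⦃u v⦄, u ∈ G.support \ X → v ∈ G.support \ X → u ∈ S → v ∈ S

/-- No single vertex separates `G`. -/
def IsTwoConnected (G : LabelledGraph V) : Prop :=
  ∀ ⦃w⦄, w ∈ G.support → G.ConnectedAvoiding {w}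

/-- No two vertices separate `G`. -/
def IsThreeConnected (G : LabelledGraph V) : Prop :=
  ∀ ⦃v w⦄, v ∈ G.support → w ∈ G.support → v ≠ w → G.ConnectedAvoiding {v, w}

/-- Inside `t`, only `a` and `b` may have neighbours outside `t`; so `t` may consist of a 2-cut
`{a, b}` and some of the components that the cut leaves. -/
structure IsSide (G : LabelledGraph V) (t : Set V) (a b : V) : Prop where
  ne : a ≠ b
  left_mem : a ∈ t
  right_mem : b ∈ t
  left_mem_support : a ∈ G.support
  right_mem_support : b ∈ G.support
  mem_of_adj : ∀ ⦃u v⦄, u ∈ t → u ≠ a → u ≠ b → G.Adj u v → v ∈ t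

namespace IsSide

theorem eq_or_eq_of_adj (h : G.IsSide t a b) (hu : u ∈ t) (hv : v ∉ t) (huv : G.Adj u v) :
    u = a ∨ u = b := by
  by_contra! hne
  exact hv (h.mem_of_adj hu hne.1 hne.2 huv)

theorem torso_support_subset (h : G.IsSide t a b) : (G.torso t a b e).support ⊆ G.support ∩ t := by
  rintro u ⟨v, huv⟩
  grind [torso_label, h.left_mem, h.right_mem, h.left_mem_support, h.right_mem_support,
    Adj.left_mem_support]

theorem torso_neighborSet (h : G.IsSide t a b) (hu : u ∈ t) (hua : u ≠ a) (hub : u ≠ b) :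
    (G.torso t a b e).neighborSet u = G.neighborSet u := by
  ext v
  have := h.mem_of_adj hu hua hub (v := v)
  grind [torso_label, mem_neighborSet]

theorem isTwoConnected_torso (h : G.IsSide t a b) (hG : G.IsTwoConnected) (he : e ≠ 0) :
    (G.torso t a b e).IsTwoConnected := by
  intro w hw S hS u v hu hv huS
  -- A closed set of the torso extends to `G`: what lies outside `t` goes with `a` or `b`.
  obtain ⟨S', hS'⟩ : ∃ S' : Set V, ∀ x, x ∈ S' ↔
      x ∈ t ∧ x ∈ S ∨ x ∉ t ∧ (a ≠ w ∧ a ∈ S ∨ b ≠ w ∧ b ∈ S) := ⟨{x | _}, fun _ ↦ Iff.rfl⟩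
  have hclosed : G.ClosedAvoiding {w} S' := by
    intro x y hx hy hxS' hxy
    have hadj : (G.torso t a b e).Adj a b := by simp [torso_label, h.ne, he]
    have hab (haw : a ≠ w) (hbw : b ≠ w) : a ∈ S ↔ b ∈ S :=
      ⟨fun ha ↦ hS haw hbw ha hadj, fun hb ↦ hS hbw haw hb hadj.symm⟩
    have hxyS := hS hx hy
    have hxt := fun hx hy ↦ h.eq_or_eq_of_adj hx hy hxy
    have hyt := fun hy hx ↦ h.eq_or_eq_of_adj hy hx hxy.symm
    rw [hS'] at hxS' ⊢
    by_cases x ∈ t <;> by_cases y ∈ t <;> grind [torso_label]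
  have hsub := h.torso_support_subset (e := e)
  have hvS' := hG (hsub hw).1 hclosed ⟨(hsub hu.1).1, hu.2⟩ ⟨(hsub hv.1).1, hv.2⟩
    ((hS' u).2 (.inl ⟨(hsub hu.1).2, huS⟩))
  exact (((hS' v).1 hvS').resolve_right fun h ↦ h.1 (hsub hv.1).2).2

end IsSide

end Connectivity

section Suppression

/-- `u` has exactly the two neighbours `a` and `b`, and can be suppressed, that is, replaced by an
edge `ab`, without creating a multiple edge, a vertex of degree two or an edge of label `0`. -/
structure IsSuppressible (G : LabelledGraph V) (u a b : V) : Prop where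
  ne : a ≠ b
  neighborSet_eq : G.neighborSet u = {a, b}
  label_eq : G.label u a = G.label u b
  not_adj : ¬G.Adj a b
  three_le_degree_left : 3 ≤ G.degree a
  three_le_degree_right : 3 ≤ G.degree b

/-- The counterexamples to the form of the theorem that is proved by induction: 2-connected graphs
without zero cycles or twins of degree two, whose vertices have degree at least three or are
suppressible. -/
structure Admissible (G : LabelledGraph V) : Prop where
  zeroCycleFree : G.ZeroCycleFree
  isTwoConnected : G.IsTwoConnected
  support_nonempty : G.support.Nonempty
  degree_or_isSuppressible : ∀ v ∈ G.support, 3 ≤ G.degree v ∨ ∃ a b, G.IsSuppressible v a b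
  eq_of_neighborSet_eq : ∀ u v, G.degree u = 2 → G.neighborSet u = G.neighborSet v → u = v

/-- Replace the path `a u b` through a vertex `u` of degree two by an edge `ab`. -/
noncomputable def suppress (G : LabelledGraph V) (u a b : V) : LabelledGraph V :=
  G.torso {u}ᶜ a b (G.label u a + G.label u b)

theorem suppress_comm (G : LabelledGraph V) (u a b : V) : G.suppress u a b = G.suppress u b a := by
  rw [suppress, torso, setEdge_comm, add_comm, suppress, torso]

theorem degree_eq_two_of_neighborSet_eq (h : G.neighborSet u = {a, b}) (hab : a ≠ b) :
    G.degree u = 2 := by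
  rw [degree, h, Set.ncard_pair hab]

theorem adj_iff_of_neighborSet_eq_pair (h : G.neighborSet u = {a, b}) :
    G.Adj u v ↔ v = a ∨ v = b := by
  rw [← mem_neighborSet, h, Set.mem_insert_iff, Set.mem_singleton_iff]

theorem isSide_compl_singleton (h : G.neighborSet u = {a, b}) (hab : a ≠ b) :
    G.IsSide {u}ᶜ a b := by
  have hua := (adj_iff_of_neighborSet_eq_pair h).2 (.inl rfl)
  have hub := (adj_iff_of_neighborSet_eq_pair h).2 (.inr rfl)
  refine ⟨hab, hua.ne.symm, hub.ne.symm, hua.right_mem_support, hub.right_mem_support, ?_⟩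
  rintro v w - hva hvb hvw rfl
  exact ((adj_iff_of_neighborSet_eq_pair h).1 hvw.symm).elim hva hvb

namespace IsSuppressible

theorem symm (h : G.IsSuppressible u a b) : G.IsSuppressible u b a :=
  ⟨h.ne.symm, by rw [h.neighborSet_eq, Set.pair_comm], h.label_eq.symm,
    fun hba ↦ h.not_adj hba.symm, h.three_le_degree_right, h.three_le_degree_left⟩

theorem isSide (h : G.IsSuppressible u a b) : G.IsSide {u}ᶜ a b :=
  isSide_compl_singleton h.neighborSet_eq h.ne

theorem adj_iff (h : G.IsSuppressible u a b) : G.Adj u v ↔ v = a ∨ v = b :=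
  adj_iff_of_neighborSet_eq_pair h.neighborSet_eq

theorem degree_eq_two (h : G.IsSuppressible u a b) : G.degree u = 2 :=
  degree_eq_two_of_neighborSet_eq h.neighborSet_eq h.ne

theorem suppress_support_subset (h : G.IsSuppressible u a b) :
    (G.suppress u a b).support ⊆ G.support \ {u} :=
  h.isSide.torso_support_subset

theorem degree_suppress_left (h : G.IsSuppressible u a b) :
    (G.suppress u a b).degree a = G.degree a := by
  have hua : G.Adj u a := h.adj_iff.2 (.inl rfl)
  have hN : (G.suppress u a b).neighborSet a = insert b (G.neighborSet a \ {u}) := by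
    ext v
    have := two_mul_label_ne_zero _ hua
    grind [suppress, torso_label, mem_neighborSet, h.ne, hua.ne, h.label_eq]
  rw [degree, hN, Set.ncard_exchange h.not_adj hua.symm, degree]

theorem degree_suppress (h : G.IsSuppressible u a b) (hvu : v ≠ u) :
    (G.suppress u a b).degree v = G.degree v := by
  obtain rfl | hva := eq_or_ne v a
  · exact h.degree_suppress_left
  obtain rfl | hvb := eq_or_ne v b
  · rw [suppress_comm, h.symm.degree_suppress_left]
  · rw [degree, suppress, h.isSide.torso_neighborSet hvu hva hvb, degree]

theorem zeroCycleFree_suppress (h : G.IsSuppressible u a b) (hG : G.ZeroCycleFree) :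
    (G.suppress u a b).ZeroCycleFree := by
  refine (hG.anti (G.induce_le {u}ᶜ)).setEdge fun U s p ↦ ?_
  have hu : u ∉ U := fun hu ↦ G.induce_support_subset {u}ᶜ (p.subset_support h.ne hu) rfl
  have hua : G.Adj u a := h.adj_iff.2 (.inl rfl)
  have hub : G.Adj u b := h.adj_iff.2 (.inr rfl)
  have := hG (.cons hua hu (p.mono (G.induce_le _))) hub.symm
  rw [G.label_comm b] at this
  convert this using 1
  ring

theorem neighborSet_suppress (h : G.IsSuppressible u a b) (hvu : v ≠ u) (hv : G.degree v = 2) :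
    (G.suppress u a b).neighborSet v = G.neighborSet v := by
  refine h.isSide.torso_neighborSet hvu ?_ ?_ <;> rintro rfl
  · exact absurd h.three_le_degree_left (by omega)
  · exact absurd h.three_le_degree_right (by omega)

theorem isSuppressible_suppress (h : G.IsSuppressible u a b) (hv : G.IsSuppressible v c d)
    (hne : G.neighborSet u ≠ G.neighborSet v) : (G.suppress u a b).IsSuppressible v c d := by
  have hvu : v ≠ u := fun heq ↦ hne (heq ▸ rfl)
  have hN := h.neighborSet_suppress hvu hv.degree_eq_two
  have hva : v ≠ a := by
    rintro rfl
    exact absurd h.three_le_degree_left (by simp [hv.degree_eq_two])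
  have hvb : v ≠ b := by
    rintro rfl
    exact absurd h.three_le_degree_right (by simp [hv.degree_eq_two])
  have hvadj : ¬G.Adj v u := fun hvu ↦ (h.adj_iff.1 hvu.symm).elim hva hvb
  have hcu : c ≠ u := fun hcu ↦ hvadj (hcu ▸ hv.adj_iff.2 (.inl rfl))
  have hdu : d ≠ u := fun hdu ↦ hvadj (hdu ▸ hv.adj_iff.2 (.inr rfl))
  refine ⟨hv.ne, by rw [hN, hv.neighborSet_eq], ?_, ?_, ?_, ?_⟩
  · have := hv.label_eq
    grind [suppress, torso_label]
  · rw [h.neighborSet_eq, hv.neighborSet_eq, Ne, Set.pair_eq_pair_iff] at hne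
    have := hv.not_adj
    grind [suppress, torso_label]
  · exact (h.degree_suppress hcu).symm ▸ hv.three_le_degree_left
  · exact (h.degree_suppress hdu).symm ▸ hv.three_le_degree_right

theorem admissible_suppress (h : G.IsSuppressible u a b) (hG : G.Admissible) :
    (G.suppress u a b).Admissible := by
  have hua : G.Adj u a := h.adj_iff.2 (.inl rfl)
  have hub : G.Adj u b := h.adj_iff.2 (.inr rfl)
  have hlabel : G.label u a + G.label u b ≠ 0 := h.label_eq ▸ two_mul_label_ne_zero _ hua
  refine ⟨h.zeroCycleFree_suppress hG.zeroCycleFree,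
    h.isSide.isTwoConnected_torso hG.isTwoConnected hlabel, ⟨a, b, ?_⟩, fun v hv ↦ ?_,
    fun v w hv hvw ↦ ?_⟩
  · simp [suppress, torso_label, h.ne, hlabel]
  · obtain ⟨hv, hvu⟩ := h.suppress_support_subset hv
    rw [h.degree_suppress hvu]
    refine (hG.degree_or_isSuppressible v hv).imp_right fun ⟨c, d, hvcd⟩ ↦ ⟨c, d, ?_⟩
    exact h.isSuppressible_suppress hvcd fun hN ↦
      hvu (hG.eq_of_neighborSet_eq u v h.degree_eq_two hN).symm
  · have hne {x} (hx : (G.suppress u a b).degree x = 2) : x ≠ u := by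
      rintro rfl
      obtain ⟨y, hxy⟩ := Set.nonempty_of_ncard_ne_zero (hx.trans_ne two_ne_zero)
      exact (h.suppress_support_subset hxy.left_mem_support).2 rfl
    have hw : (G.suppress u a b).degree w = 2 := by rw [← hv, degree, ← hvw, degree]
    have hv' := h.degree_suppress (hne hv) ▸ hv
    have hw' := h.degree_suppress (hne hw) ▸ hw
    rw [h.neighborSet_suppress (hne hv) hv', h.neighborSet_suppress (hne hw) hw'] at hvw
    exact hG.eq_of_neighborSet_eq v w hv' hvw

end IsSuppressible

end Suppression

section Minimal

/-- The pairs of adjacent vertices; every edge is counted twice. -/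
def darts (G : LabelledGraph V) : Set (V × V) := {p | G.Adj p.1 p.2}

/-- The number of vertices, then the number of edges. -/
noncomputable def size (G : LabelledGraph V) : ℕ ×ₗ ℕ := toLex (G.support.ncard, G.darts.ncard)

/-- An admissible graph of minimal size: a minimal counterexample. -/
def IsMinimal (G : LabelledGraph V) : Prop := MinimalFor Admissible size G

theorem Admissible.exists_isMinimal (hG : G.Admissible) : ∃ H : LabelledGraph V, H.IsMinimal :=
  exists_minimalFor_of_wellFoundedLT Admissible size ⟨G, hG⟩

theorem size_lt_of_ncard_support_lt (h : H.support.ncard < G.support.ncard) : H.size < G.size :=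
  Prod.Lex.toLex_lt_toLex.2 (.inl h)

theorem IsMinimal.admissible (hG : G.IsMinimal) : G.Admissible := hG.prop

theorem IsMinimal.not_admissible_of_size_lt (hG : G.IsMinimal) (h : H.size < G.size) :
    ¬H.Admissible := hG.not_prop_of_lt h

theorem degree_eq_of_adj_iff (h : ∀ v, G.Adj u v ↔ H.Adj u v) : G.degree u = H.degree u :=
  congrArg Set.ncard (Set.ext h)

theorem support_eq_of_adj_iff (h : ∀ u v, G.Adj u v ↔ H.Adj u v) : G.support = H.support :=
  Set.ext fun u ↦ exists_congr (h u)

theorem IsTwoConnected.of_adj_iff (hG : G.IsTwoConnected) (h : ∀ u v, G.Adj u v ↔ H.Adj u v) :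
    H.IsTwoConnected := by
  intro w hw S hS
  rw [← support_eq_of_adj_iff h] at hw ⊢
  exact hG hw fun u v hu hv huS huv ↦ hS hu hv huS ((h u v).1 huv)

variable [Finite V]

theorem degree_pos_iff : 0 < G.degree v ↔ v ∈ G.support := Set.ncard_pos

theorem size_lt_of_ssubset_support (h : H.support ⊂ G.support) : H.size < G.size :=
  size_lt_of_ncard_support_lt (Set.ncard_lt_ncard h)

theorem Admissible.of_three_le_degree (hzero : G.ZeroCycleFree) (hconn : G.IsTwoConnected)
    (hne : G.support.Nonempty) (hdeg : ∀ v ∈ G.support, 3 ≤ G.degree v) : G.Admissible where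
  zeroCycleFree := hzero
  isTwoConnected := hconn
  support_nonempty := hne
  degree_or_isSuppressible v hv := .inl (hdeg v hv)
  eq_of_neighborSet_eq u v hu _ := by
    have := hdeg u (degree_pos_iff.1 (by omega))
    omega

theorem IsMinimal.three_le_degree (hG : G.IsMinimal) (hv : v ∈ G.support) : 3 ≤ G.degree v := by
  refine (hG.admissible.degree_or_isSuppressible v hv).resolve_right ?_
  rintro ⟨a, b, h⟩
  refine hG.not_admissible_of_size_lt ?_ (h.admissible_suppress hG.admissible)
  exact size_lt_of_ssubset_support (h.suppress_support_subset.trans_ssubset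
    (Set.sdiff_singleton_ssubset.2 hv))

end Minimal

section Rooted

theorem exists_ne_zero_add_ne_zero : ∀ l : ZMod 3, ∃ e ≠ 0, e + l ≠ 0 := by decide

/-- Two paths from `x` to `y` have different label sums. -/
def HasTwoPathSums (G : LabelledGraph V) (x y : V) : Prop :=
  ∃ U W s r, G.HasPath x y U s ∧ G.HasPath x y W r ∧ s ≠ r

/-- What is left of a minimal counterexample on one side of a `2`-separation `{x, y}`, with an edge
`xy` whose label is disregarded in place of the other side. -/
structure IsRooted (G : LabelledGraph V) (x y : V) : Prop where
  adj : G.Adj x y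
  isTwoConnected : G.IsTwoConnected
  zeroCycleFree : (G.setEdge x y 0).ZeroCycleFree
  three_le_degree : ∀ v ∈ G.support, v ≠ x → v ≠ y → 3 ≤ G.degree v
  exists_inner : ∃ v ∈ G.support, v ≠ x ∧ v ≠ y

theorem HasTwoPathSums.mono (h : H.HasTwoPathSums x y) (hle : H ≤ G) : G.HasTwoPathSums x y :=
  let ⟨U, W, s, r, p, q, hne⟩ := h
  ⟨U, W, s, r, p.mono hle, q.mono hle, hne⟩

theorem HasTwoPathSums.symm (h : G.HasTwoPathSums x y) : G.HasTwoPathSums y x :=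
  let ⟨U, W, s, r, p, q, hne⟩ := h
  ⟨U, W, s, r, p.reverse, q.reverse, hne⟩

theorem HasTwoPathSums.cons (h : (G.induce {x}ᶜ).HasTwoPathSums u y) (hxu : G.Adj x u)
    (huy : u ≠ y) : G.HasTwoPathSums x y := by
  obtain ⟨U, W, s, r, p, q, hne⟩ := h
  have hx {U s} (p : (G.induce {x}ᶜ).HasPath u y U s) : x ∉ U := fun hx ↦
    G.induce_support_subset {x}ᶜ (p.subset_support huy hx) rfl
  exact ⟨_, _, _, _, .cons hxu (hx p) (p.mono (G.induce_le _)),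
    .cons hxu (hx q) (q.mono (G.induce_le _)), fun heq ↦ hne (add_left_cancel heq)⟩

theorem IsSide.isRooted_torso (h : G.IsSide t a b) (hconn : G.IsTwoConnected)
    (hzero : ((G.induce t).setEdge a b 0).ZeroCycleFree)
    (hdeg : ∀ v ∈ G.support, v ∈ t → v ≠ a → v ≠ b → 3 ≤ G.degree v)
    (hinner : ∃ v ∈ G.support, v ∈ t ∧ v ≠ a ∧ v ≠ b) : (G.torso t a b 1).IsRooted a b := by
  obtain ⟨v, ⟨u, hvu⟩, hvt, hva, hvb⟩ := hinner
  refine ⟨?_, h.isTwoConnected_torso hconn one_ne_zero, by rwa [torso, setEdge_setEdge],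
    fun v hv hva hvb ↦ ?_, v, ?_, hva, hvb⟩
  · simp [torso_label, h.ne]
  · obtain ⟨hv, hvt⟩ := h.torso_support_subset hv
    rw [degree, h.torso_neighborSet hvt hva hvb]
    exact hdeg v hv hvt hva hvb
  · refine ⟨u, mem_neighborSet.1 ?_⟩
    rwa [h.torso_neighborSet hvt hva hvb]

namespace IsRooted

theorem symm (h : G.IsRooted x y) : G.IsRooted y x where
  adj := h.adj.symm
  isTwoConnected := h.isTwoConnected
  zeroCycleFree := setEdge_comm G x y 0 ▸ h.zeroCycleFree
  three_le_degree v hv hvy hvx := h.three_le_degree v hv hvx hvy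
  exists_inner := h.exists_inner.imp fun _ hv ↦ ⟨hv.1, hv.2.symm⟩

theorem exists_adj_ne (h : G.IsRooted x y) : ∃ z, G.Adj x z ∧ z ≠ y := by
  by_contra! hx
  obtain ⟨v, hv, hvx, hvy⟩ := h.exists_inner
  refine hvx (h.isTwoConnected h.adj.right_mem_support (S := {x}) ?_
    ⟨h.adj.left_mem_support, h.adj.ne⟩ ⟨hv, hvy⟩ rfl)
  rintro u v - hvy rfl huv
  exact absurd (hx v huv) hvy

theorem neighborSet_eq_or_three_le_degree [Finite V] (h : G.IsRooted x y) :
    (∃ z, G.neighborSet x = {z, y} ∧ z ≠ y) ∨ 3 ≤ G.degree x := by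
  obtain ⟨z, hxz, hzy⟩ := h.exists_adj_ne
  have hsub : {z, y} ⊆ G.neighborSet x := Set.insert_subset hxz (Set.singleton_subset_iff.2 h.adj)
  refine (hsub.eq_or_ssubset).imp (fun heq ↦ ⟨z, heq.symm, hzy⟩) fun hss ↦ ?_
  exact (Set.ncard_pair hzy).symm.trans_lt (Set.ncard_lt_ncard hss)

variable [Finite V]

theorem torso_compl_singleton {z : V} (h : G.IsRooted x y) (hx : G.neighborSet x = {z, y})
    (hzy : z ≠ y) : (G.torso {x}ᶜ z y 1).IsRooted z y := by
  have hxz : G.Adj x z := (adj_iff_of_neighborSet_eq_pair hx).2 (.inl rfl)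
  refine (isSide_compl_singleton hx hzy).isRooted_torso h.isTwoConnected ?_
    (fun v hv hvx _ hvy ↦ h.three_le_degree v hv hvx hvy) ?_
  · rw [← setEdge_induce_compl_singleton]
    exact (h.zeroCycleFree.anti (induce_le _ _)).anti (setEdge_zero_le _ _ _)
  · have hz := h.three_le_degree z hxz.right_mem_support hxz.ne.symm hzy
    obtain ⟨w, hzw, hw⟩ := Set.exists_mem_notMem_of_ncard_lt_ncard
      ((Set.ncard_pair h.adj.ne).trans_lt hz)
    rw [Set.mem_insert_iff, Set.mem_singleton_iff, not_or] at hw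
    exact ⟨w, hzw.right_mem_support, hw.1, hzw.ne.symm, hw.2⟩

theorem exists_admissible_support_eq (h : G.IsRooted x y) (hx : 3 ≤ G.degree x)
    (hy : 3 ≤ G.degree y) (hsums : ¬(G.setEdge x y 0).HasTwoPathSums x y) :
    ∃ H : LabelledGraph V, H.Admissible ∧ H.support = G.support := by
  obtain ⟨l, hl⟩ : ∃ l, ∀ U s, (G.setEdge x y 0).HasPath x y U s → s = l := by
    by_cases hpath : ∃ U s, (G.setEdge x y 0).HasPath x y U s
    · obtain ⟨U, l, p⟩ := hpath
      exact ⟨l, fun W s q ↦ by_contra fun hne ↦ hsums ⟨W, U, s, l, q, p, hne⟩⟩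
    · exact ⟨0, fun U s p ↦ absurd ⟨U, s, p⟩ hpath⟩
  obtain ⟨e, he, hel⟩ := exists_ne_zero_add_ne_zero l
  have hadj u v : G.Adj u v ↔ (G.setEdge x y e).Adj u v := by
    have := h.adj
    have := h.adj.symm
    grind [setEdge_label]
  refine ⟨G.setEdge x y e, .of_three_le_degree ?_ (h.isTwoConnected.of_adj_iff hadj)
    ⟨x, y, (hadj x y).1 h.adj⟩ fun v hv ↦ ?_, (support_eq_of_adj_iff hadj).symm⟩
  · rw [← setEdge_setEdge G x y 0 e]
    exact h.zeroCycleFree.setEdge fun U s p ↦ hl U s p ▸ hel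
  · rw [← support_eq_of_adj_iff hadj] at hv
    rw [← degree_eq_of_adj_iff (hadj v)]
    by_cases hvx : v = x
    · rwa [hvx]
    by_cases hvy : v = y
    · rwa [hvy]
    · exact h.three_le_degree v hv hvx hvy

theorem hasTwoPathSums {n : ℕ} (hmin : ∀ H : LabelledGraph V, H.Admissible → n ≤ H.support.ncard)
    (h : G.IsRooted x y) (hn : G.support.ncard < n) : (G.setEdge x y 0).HasTwoPathSums x y := by
  induction hk : G.support.ncard using Nat.strong_induction_on generalizing G x y with
  | _ k ih =>
  have of_degree_two {x y z} (h : G.IsRooted x y) (hx : G.neighborSet x = {z, y}) (hzy : z ≠ y) :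
      (G.setEdge x y 0).HasTwoPathSums x y := by
    have hxz : G.Adj x z := (adj_iff_of_neighborSet_eq_pair hx).2 (.inl rfl)
    have hlt : (G.torso {x}ᶜ z y 1).support.ncard < G.support.ncard := Set.ncard_lt_ncard <|
      (isSide_compl_singleton hx hzy).torso_support_subset.trans_ssubset
        (Set.sdiff_singleton_ssubset.2 hxz.left_mem_support)
    have := ih _ (hk ▸ hlt) (h.torso_compl_singleton hx hzy) (hlt.trans hn) rfl
    rw [torso, setEdge_setEdge, ← setEdge_induce_compl_singleton (e := 0) (y := y)] at this
    refine (this.mono (setEdge_zero_le _ _ _)).cons (hxz.congr ?_) hzy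
    grind [setEdge_label]
  obtain ⟨z, hx, hzy⟩ | hx := h.neighborSet_eq_or_three_le_degree
  · exact of_degree_two h hx hzy
  obtain ⟨z, hy, hzx⟩ | hy := h.symm.neighborSet_eq_or_three_le_degree
  · rw [setEdge_comm]
    exact (of_degree_two h.symm hy hzx).symm
  by_contra hsums
  obtain ⟨H, hH, hsupp⟩ := h.exists_admissible_support_eq hx hy hsums
  exact (hmin H hH).not_gt (hsupp ▸ hn)

end IsRooted

end Rooted

section ThreeConnected

theorem HasPath.add_ne_zero (p : G.HasPath a b U s) (hG : G.ZeroCycleFree) (hab : a ≠ b)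
    (q : (G.setEdge a b 0).HasPath a b W r) (hUW : U ∩ W ⊆ {a, b}) : s + r ≠ 0 := by
  obtain ⟨h, -⟩ | ⟨c, W, r, hac, haW, q', rfl, rfl⟩ := q.cons_cases
  · exact absurd h hab
  obtain ⟨rfl, -⟩ | ⟨d, W, r, hdb, hbW, q'', rfl, rfl⟩ := q'.concat_cases
  · exact absurd (setEdge_label_self hab) hac
  have hle := G.setEdge_zero_le a b
  have hdisj : Disjoint U W := by
    refine Set.disjoint_left.2 fun v hvU hvW ↦ ?_
    obtain rfl | rfl := hUW ⟨hvU, .inr (.inr hvW)⟩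
    · exact haW (.inr hvW)
    · exact hbW hvW
  have := hG (p.append (hdb.mono hle).symm (q''.mono hle).reverse hdisj) (hac.mono hle).symm
  rw [hle hac, hle hdb, G.label_comm a, G.label_comm d]
  convert this using 1
  ring

theorem exists_add_eq_zero : ∀ {s s' r r' : ZMod 3}, s ≠ s' → r ≠ r' →
    s + r = 0 ∨ s + r' = 0 ∨ s' + r = 0 ∨ s' + r' = 0 := by decide

theorem ZeroCycleFree.not_hasTwoPathSums {t' : Set V} (hG : G.ZeroCycleFree) (hab : a ≠ b)
    (ht : t ∩ t' ⊆ {a, b}) (h : ((G.induce t).setEdge a b 0).HasTwoPathSums a b) :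
    ¬((G.induce t').setEdge a b 0).HasTwoPathSums a b := by
  rintro ⟨W, W', r, r', q, q', hr⟩
  obtain ⟨U, U', s, s', p, p', hs⟩ := h
  have hne {U s W r} (p : ((G.induce t).setEdge a b 0).HasPath a b U s)
      (q : ((G.induce t').setEdge a b 0).HasPath a b W r) : s + r ≠ 0 := by
    have p' := p.mono (setEdge_zero_le _ _ _)
    have q' := q.mono (setEdge_zero_le _ _ _)
    refine (p'.mono (induce_le _ _)).add_ne_zero hG hab (q.mono fun u v huv ↦ ?_)
      (fun v hv ↦ ht ⟨?_, ?_⟩)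
    · grind [setEdge_label, induce_label]
    · exact induce_support_subset _ _ (p'.subset_support hab hv.1)
    · exact induce_support_subset _ _ (q'.subset_support hab hv.2)
  have := hne p q
  have := hne p q'
  have := hne p' q
  have := hne p' q'
  obtain h | h | h | h := exists_add_eq_zero hs hr <;> contradiction

theorem ClosedAvoiding.isSide_union (hS : G.ClosedAvoiding {v, w} S) (hvw : v ≠ w)
    (hv : v ∈ G.support) (hw : w ∈ G.support) : G.IsSide (S ∪ {v, w}) v w := by
  refine ⟨hvw, by simp, by simp, hv, hw, fun x y hx hxv hxw hxy ↦ ?_⟩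
  by_contra hy
  rw [Set.mem_union, not_or] at hy
  exact hy.1 (hS (by simp [hxv, hxw]) hy.2 (hx.resolve_right (by simp [hxv, hxw])) hxy)

theorem IsMinimal.isThreeConnected [Finite V] (hG : G.IsMinimal) : G.IsThreeConnected := by
  intro v w hv hw hvw S hS a b ha hb haS
  by_contra hbS
  have hmin (H : LabelledGraph V) (hH : H.Admissible) : G.support.ncard ≤ H.support.ncard :=
    not_lt.1 fun hlt ↦ hG.not_admissible_of_size_lt (size_lt_of_ncard_support_lt hlt) hH
  have key {S a b} (hS : G.ClosedAvoiding {v, w} S) (ha : a ∈ G.support \ {v, w})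
      (hb : b ∈ G.support \ {v, w}) (haS : a ∈ S) (hbS : b ∉ S) :
      ((G.induce (S ∪ {v, w})).setEdge v w 0).HasTwoPathSums v w := by
    have hside := hS.isSide_union hvw hv hw
    have hrooted := hside.isRooted_torso hG.admissible.isTwoConnected
      ((hG.admissible.zeroCycleFree.anti (induce_le _ _)).anti (setEdge_zero_le _ _ _))
      (fun x hx _ _ _ ↦ hG.three_le_degree hx) ⟨a, ha.1, .inl haS, by simpa using ha.2⟩
    have := hrooted.hasTwoPathSums hmin (Set.ncard_lt_ncard ?_)
    · rwa [torso, setEdge_setEdge] at this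
    · refine (Set.ssubset_iff_of_subset fun x hx ↦ (hside.torso_support_subset hx).1).2
        ⟨b, hb.1, fun hbt ↦ ?_⟩
      exact (hside.torso_support_subset hbt).2.elim hbS hb.2
  have hS' : G.ClosedAvoiding {v, w} Sᶜ := fun x y hx hy hxS hxy hyS ↦ hxS (hS hy hx hyS hxy.symm)
  refine hG.admissible.zeroCycleFree.not_hasTwoPathSums hvw ?_ (key hS ha hb haS hbS)
    (key hS' hb ha hbS (not_not_intro haS))
  rw [← Set.inter_union_distrib_right, Set.inter_compl_self, Set.empty_union]

end ThreeConnected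

section Cubic

/-- `u` has exactly the three neighbours `a`, `b` and `c`. -/
structure IsCubic (G : LabelledGraph V) (u a b c : V) : Prop where
  ne₁₂ : a ≠ b
  ne₁₃ : a ≠ c
  ne₂₃ : b ≠ c
  neighborSet_eq : G.neighborSet u = {a, b, c}

namespace IsCubic

theorem rotate (h : G.IsCubic u a b c) : G.IsCubic u b c a :=
  ⟨h.ne₂₃, h.ne₁₂.symm, h.ne₁₃.symm, by
    rw [h.neighborSet_eq, Set.insert_comm, Set.pair_comm a c]⟩

theorem swap (h : G.IsCubic u a b c) : G.IsCubic u a c b :=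
  ⟨h.ne₁₃, h.ne₁₂, h.ne₂₃.symm, by rw [h.neighborSet_eq, Set.pair_comm b c]⟩

theorem adj_iff (h : G.IsCubic u a b c) : G.Adj u v ↔ v = a ∨ v = b ∨ v = c := by
  rw [← mem_neighborSet, h.neighborSet_eq]
  rfl

theorem adj₁ (h : G.IsCubic u a b c) : G.Adj u a := h.adj_iff.2 (.inl rfl)

theorem adj₂ (h : G.IsCubic u a b c) : G.Adj u b := h.rotate.adj₁

theorem adj₃ (h : G.IsCubic u a b c) : G.Adj u c := h.rotate.adj₂

end IsCubic

theorem exists_isCubic (h : G.degree u = 3) : ∃ a b c, G.IsCubic u a b c :=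
  let ⟨a, b, c, hab, hac, hbc, h⟩ := Set.ncard_eq_three.1 h
  ⟨a, b, c, hab, hac, hbc, h⟩

theorem exists_isCubic_of_adj (h : G.degree u = 3) (ha : G.Adj u a) (hb : G.Adj u b)
    (hab : a ≠ b) : ∃ c, G.IsCubic u c a b := by
  obtain ⟨q, r, hu⟩ : ∃ q r, G.IsCubic u a q r := by
    obtain ⟨p, q, r, h⟩ := exists_isCubic h
    obtain rfl | rfl | rfl := h.adj_iff.1 ha
    exacts [⟨q, r, h⟩, ⟨r, p, h.rotate⟩, ⟨p, q, h.rotate.rotate⟩]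
  obtain rfl | rfl | rfl := hu.adj_iff.1 hb
  exacts [absurd rfl hab, ⟨r, hu.rotate.rotate⟩, ⟨q, hu.rotate.swap⟩]

variable [Finite V]

theorem exists_adj_of_three_le_degree (h : 3 ≤ G.degree x) (a b : V) :
    ∃ q, G.Adj x q ∧ q ≠ a ∧ q ≠ b := by
  have hlt : ({a, b} : Set V).ncard < G.degree x := (Set.ncard_insert_le a {b}).trans_lt (by simpa)
  obtain ⟨q, hxq, hq⟩ := Set.exists_mem_notMem_of_ncard_lt_ncard hlt
  exact ⟨q, hxq, by simpa using hq⟩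

theorem exists_adj_of_four_le_degree (h : 4 ≤ G.degree x) (a b c : V) :
    ∃ q, G.Adj x q ∧ q ≠ a ∧ q ≠ b ∧ q ≠ c := by
  have hlt : ({a, b, c} : Set V).ncard < G.degree x := by
    have := Set.ncard_insert_le a {b, c}
    have := Set.ncard_insert_le b {c}
    rw [Set.ncard_singleton] at this
    omega
  obtain ⟨q, hxq, hq⟩ := Set.exists_mem_notMem_of_ncard_lt_ncard hlt
  exact ⟨q, hxq, by simpa using hq⟩

end Cubic

section EdgeDeletion

theorem setEdge_zero_neighborSet_left (G : LabelledGraph V) (u v : V) :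
    (G.setEdge u v 0).neighborSet u = G.neighborSet u \ {v} := by
  ext w
  have := G.label_self u
  grind [mem_neighborSet, setEdge_label]

theorem setEdge_neighborSet (hxu : x ≠ u) (hxv : x ≠ v) :
    (G.setEdge u v e).neighborSet x = G.neighborSet x := by
  ext w
  grind [mem_neighborSet, setEdge_label]

theorem setEdge_degree (hxu : x ≠ u) (hxv : x ≠ v) : (G.setEdge u v e).degree x = G.degree x := by
  rw [degree, setEdge_neighborSet hxu hxv, degree]

theorem setEdge_zero_support_subset (G : LabelledGraph V) (u v : V) :
    (G.setEdge u v 0).support ⊆ G.support :=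
  fun _ ⟨_, h⟩ ↦ (h.mono (G.setEdge_zero_le u v)).left_mem_support

/-- After deletion of the edge `uv`, the vertex `u` still has degree at least three, or else it is
suppressible if its other two neighbours have degree at least three. -/
def IsDeletableAt (G : LabelledGraph V) (u v : V) : Prop :=
  4 ≤ G.degree u ∨ ∃ a b, G.IsCubic u v a b ∧ G.label u a = G.label u b ∧ ¬G.Adj a b

theorem IsCubic.setEdge_zero_neighborSet (h : G.IsCubic u v a b) :
    (G.setEdge u v 0).neighborSet u = {a, b} := by
  rw [setEdge_zero_neighborSet_left, h.neighborSet_eq, Set.insert_sdiff_self_of_notMem]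
  simp [h.ne₁₂, h.ne₁₃]

theorem IsDeletableAt.setEdge_zero [Finite V] (h : G.IsDeletableAt u v) (huv : G.Adj u v)
    (hdeg : ∀ v ∈ G.support, 3 ≤ G.degree v) : 3 ≤ (G.setEdge u v 0).degree u ∨
      ∃ a b, (G.setEdge u v 0).IsSuppressible u a b ∧ G.IsCubic u v a b ∧ ¬G.Adj a b := by
  obtain h | ⟨a, b, h, hlabel, hadj⟩ := h
  · left
    rw [degree, setEdge_zero_neighborSet_left, Set.ncard_sdiff_singleton_of_mem huv]
    exact Nat.le_sub_one_of_lt h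
  · have hle := G.setEdge_zero_le u v
    refine .inr ⟨a, b, ⟨h.ne₂₃, h.setEdge_zero_neighborSet, ?_, fun hab ↦ hadj (hab.mono hle),
      ?_, ?_⟩, h, hadj⟩
    · rwa [hle, hle]
      all_goals rw [← mem_neighborSet, h.setEdge_zero_neighborSet]; simp
    · rw [setEdge_degree h.adj₂.ne.symm h.ne₁₂.symm]
      exact hdeg a h.adj₂.right_mem_support
    · rw [setEdge_degree h.adj₃.ne.symm h.ne₁₃.symm]
      exact hdeg b h.adj₃.right_mem_support

variable [Finite V]

theorem IsThreeConnected.isTwoConnected_setEdge_zero (hG : G.IsThreeConnected)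
    (hG' : G.IsTwoConnected) (hdeg : ∀ v ∈ G.support, 3 ≤ G.degree v) (huv : G.Adj u v) :
    (G.setEdge u v 0).IsTwoConnected := by
  intro w hw S hS
  have hsupp := G.setEdge_zero_support_subset u v
  have hoff {x y} (hxy : G.Adj x y) (h : ¬(x = u ∧ y = v ∨ x = v ∧ y = u)) :
      (G.setEdge u v 0).Adj x y := by grind [setEdge_label]
  have hends {x y} (hxw : x ≠ w) (hyw : y ≠ w) (h : x = u ∧ y = v ∨ x = v ∧ y = u)
      (hxS : x ∈ S) : y ∈ S := by
    have hxy : G.Adj x y := by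
      obtain ⟨rfl, rfl⟩ | ⟨rfl, rfl⟩ := h
      · exact huv
      · exact huv.symm
    obtain ⟨q, hxq, hqy, hqw⟩ :=
      exists_adj_of_three_le_degree (hdeg x hxy.left_mem_support) y w
    have hqS : q ∈ S := hS hxw hqw hxS (hoff hxq (by grind))
    -- In `G` without `x` and `w`, the vertices `q` and `y` are connected, and `xy` is not needed.
    refine hG hxy.left_mem_support (hsupp hw) hxw (fun p r hp hr hpS hpr ↦ ?_)
      ⟨hxq.right_mem_support, by simp [hxq.ne.symm, hqw]⟩
      ⟨hxy.right_mem_support, by simp [hxy.ne.symm, hyw]⟩ hqS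
    rw [Set.mem_insert_iff, not_or] at hp hr
    exact hS hp.2 hr.2 hpS (hoff hpr (by grind))
  have hclosed : G.ClosedAvoiding {w} S := fun x y hx hy hxS hxy ↦ by
    by_cases h : x = u ∧ y = v ∨ x = v ∧ y = u
    · exact hends hx hy h hxS
    · exact hS hx hy hxS (hoff hxy h)
  exact fun a b ha hb ↦ hG' (hsupp hw) hclosed ⟨hsupp ha.1, ha.2⟩ ⟨hsupp hb.1, hb.2⟩

theorem IsThreeConnected.setEdge_zero_neighborSet_ne (hG : G.IsThreeConnected)
    (hdeg : ∀ v ∈ G.support, 3 ≤ G.degree v) (hu : G.IsCubic u v a b) (hab : ¬G.Adj a b) :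
    (G.setEdge u v 0).neighborSet u ≠ (G.setEdge u v 0).neighborSet v := by
  intro hN
  rw [hu.setEdge_zero_neighborSet, setEdge_comm, setEdge_zero_neighborSet_left] at hN
  have ha := hu.adj₂.right_mem_support
  obtain ⟨q, haq, hqu, hqv⟩ := exists_adj_of_three_le_degree (hdeg a ha) u v
  have hclosed : G.ClosedAvoiding {a, b} {u, v} := by
    rintro x y - hy (rfl | rfl) hxy
    · exact (hu.adj_iff.1 hxy).elim .inr fun h ↦ absurd h hy
    · exact or_iff_not_imp_left.2 fun hyu ↦ absurd (hN.ge ⟨hxy, hyu⟩) hy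
  have := hG ha hu.adj₃.right_mem_support hu.ne₂₃ hclosed
    ⟨hu.adj₁.left_mem_support, by simp [hu.adj₂.ne, hu.adj₃.ne]⟩
    ⟨haq.right_mem_support, not_or_intro haq.ne.symm fun hqb ↦ hab (hqb ▸ haq)⟩ (.inl rfl)
  exact this.elim hqu hqv

theorem IsMinimal.admissible_setEdge_zero (hG : G.IsMinimal) (huv : G.Adj u v)
    (hu : G.IsDeletableAt u v) (hv : G.IsDeletableAt v u) : (G.setEdge u v 0).Admissible := by
  have hdeg := fun v ↦ hG.three_le_degree (v := v)
  have hu := hu.setEdge_zero huv hdeg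
  have hv := hv.setEdge_zero huv.symm hdeg
  rw [setEdge_comm] at hv
  have hends {x} (hx : (G.setEdge u v 0).degree x = 2) : x = u ∨ x = v := by
    by_contra! hne
    rw [setEdge_degree hne.1 hne.2] at hx
    have := hdeg x (degree_pos_iff.1 (by omega))
    omega
  have hne (h : (G.setEdge u v 0).degree u = 2) :
      (G.setEdge u v 0).neighborSet u ≠ (G.setEdge u v 0).neighborSet v := by
    obtain h' | ⟨a, b, -, hcubic, hab⟩ := hu
    · omega
    · exact hG.isThreeConnected.setEdge_zero_neighborSet_ne hdeg hcubic hab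
  refine ⟨hG.admissible.zeroCycleFree.anti (G.setEdge_zero_le u v),
    hG.isThreeConnected.isTwoConnected_setEdge_zero hG.admissible.isTwoConnected hdeg huv, ?_,
    fun x hx ↦ ?_, fun x y hx hxy ↦ ?_⟩
  · obtain ⟨q, huq, hqv, -⟩ := exists_adj_of_three_le_degree (hdeg u huv.left_mem_support) v v
    refine ⟨u, q, ?_⟩
    rw [← mem_neighborSet, setEdge_zero_neighborSet_left]
    exact ⟨huq, hqv⟩
  · obtain rfl | hxu := eq_or_ne x u
    · exact hu.imp_right fun ⟨a, b, h, _⟩ ↦ ⟨a, b, h⟩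
    obtain rfl | hxv := eq_or_ne x v
    · exact hv.imp_right fun ⟨a, b, h, _⟩ ↦ ⟨a, b, h⟩
    rw [setEdge_degree hxu hxv]
    exact .inl (hdeg x (G.setEdge_zero_support_subset u v hx))
  · have hy : (G.setEdge u v 0).degree y = 2 := by rw [← hx, degree, ← hxy, degree]
    obtain rfl | rfl := hends hx <;> obtain rfl | rfl := hends hy
    · rfl
    · exact absurd hxy (hne hx)
    · exact absurd hxy.symm (hne hy)
    · rfl

theorem size_setEdge_zero_lt (huv : G.Adj u v) : (G.setEdge u v 0).size < G.size := by
  refine Prod.Lex.toLex_strictMono (Prod.mk_lt_mk.2 (.inr ⟨?_, Set.ncard_lt_ncard ?_⟩))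
  · exact Set.ncard_le_ncard (G.setEdge_zero_support_subset u v)
  · refine (Set.ssubset_iff_of_subset fun p hp ↦ Adj.mono hp (G.setEdge_zero_le u v)).2
      ⟨(u, v), huv, ?_⟩
    exact fun h ↦ h (setEdge_label_self huv.ne)

theorem IsMinimal.not_isDeletableAt (hG : G.IsMinimal) (huv : G.Adj u v)
    (hu : G.IsDeletableAt u v) : ¬G.IsDeletableAt v u := fun hv ↦
  hG.not_admissible_of_size_lt (size_setEdge_zero_lt huv) (hG.admissible_setEdge_zero huv hu hv)

end EdgeDeletion

section GoodEdge

theorem HasPath.of_injOn {w : ℕ → V} {n : ℕ} (hinj : Set.InjOn w (Set.Iic n))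
    (hadj : ∀ i < n, G.Adj (w i) (w (i + 1))) :
    G.HasPath (w 0) (w n) (w '' Set.Iic n) (∑ i ∈ Finset.range n, G.label (w i) (w (i + 1))) := by
  induction n with
  | zero =>
    rw [Finset.sum_range_zero, ← Nat.bot_eq_zero, Set.Iic_bot, Set.image_singleton]
    exact nil _
  | succ n ih =>
    have hsub : Set.Iic n ⊆ Set.Iic (n + 1) := Set.Iic_subset_Iic.2 n.le_succ
    have := (ih (hinj.mono hsub) fun i hi ↦ hadj i (by omega)).concat (hadj n n.lt_succ_self) <| by
      rintro ⟨i, hi : i ≤ n, hwi⟩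
      have := hinj (hsub hi) Set.self_mem_Iic hwi
      omega
    rwa [← Set.image_insert_eq, ← Order.succ_eq_add_one, ← Order.Iic_succ, Order.succ_eq_add_one,
      ← Finset.sum_range_succ] at this

theorem ZeroCycleFree.sum_ne_zero (hG : G.ZeroCycleFree) {w : ℕ → V} {n : ℕ} (hn : 0 < n)
    (hinj : Set.InjOn w (Set.Iio n)) (hadj : ∀ i < n, G.Adj (w i) (w (i + 1))) (hw : w n = w 0) :
    ∑ i ∈ Finset.range n, G.label (w i) (w (i + 1)) ≠ 0 := by
  obtain ⟨n, rfl⟩ := Nat.exists_eq_add_of_lt hn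
  rw [zero_add] at *
  rw [Finset.sum_range_succ, hw]
  refine hG (.of_injOn (hinj.mono fun i ↦ Nat.lt_succ_of_le) fun i hi ↦ hadj i (by omega)) ?_
  exact hw ▸ hadj n n.lt_succ_self

theorem exists_iterate_mem_periodicPts [Finite V] (o : V → V) (v : V) :
    ∃ n, o^[n] v ∈ Function.periodicPts o := by
  obtain ⟨n, m, heq, hne⟩ := Function.not_injective_iff.1
    (not_injective_infinite_finite fun n : ℕ ↦ o^[n] v)
  wlog hnm : n < m generalizing n m
  · exact this m n heq.symm hne.symm (by omega)
  refine ⟨n, Function.mk_mem_periodicPts (Nat.sub_pos_of_lt hnm) ?_⟩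
  rw [Function.IsPeriodicPt, Function.IsFixedPt, ← Function.iterate_add_apply,
    Nat.sub_add_cancel hnm.le]
  exact heq.symm

theorem eq_neg_of_ne : ∀ s t : ZMod 3, s ≠ 0 → t ≠ 0 → s ≠ t → s = -t := by decide

-- Otherwise the labels along the orbits of `o` alternate in sign. A periodic orbit then has even
-- length, and its label sum is `0`.
theorem ZeroCycleFree.exists_label_eq [Finite V] (hG : G.ZeroCycleFree)
    (hne : G.support.Nonempty) {o : V → V} (ho : ∀ v ∈ G.support, G.Adj v (o v)) :
    ∃ u ∈ G.support, G.label (o u) (o (o u)) = G.label u (o u) := by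
  by_contra! hlabel
  obtain ⟨v, hv⟩ := hne
  obtain ⟨m, hperiodic⟩ := exists_iterate_mem_periodicPts o v
  have hmem i : o^[i] (o^[m] v) ∈ G.support := by
    have hmaps : Set.MapsTo o G.support G.support := fun u hu ↦ (ho u hu).right_mem_support
    exact hmaps.iterate i (hmaps.iterate m hv)
  set w : ℕ → V := fun i ↦ o^[i] (o^[m] v)
  have hw i : w (i + 1) = o (w i) := Function.iterate_succ_apply' o i _
  have hadj i : G.Adj (w i) (w (i + 1)) := hw i ▸ ho _ (hmem i)
  have halt i : G.label (w i) (w (i + 1)) = (-1) ^ i * G.label (w 0) (w 1) := by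
    induction i with
    | zero => simp
    | succ i ih =>
      rw [eq_neg_of_ne _ _ (hadj (i + 1)) (hadj i) (by simpa only [hw] using hlabel _ (hmem i)), ih,
        pow_succ]
      ring
  set n := Function.minimalPeriod o (o^[m] v)
  have hwn : w n = w 0 := Function.iterate_minimalPeriod
  have hn : 0 < n := Function.minimalPeriod_pos_of_mem_periodicPts hperiodic
  have hsum : ∑ i ∈ Finset.range n, G.label (w i) (w (i + 1)) ≠ 0 :=
    hG.sum_ne_zero hn Function.iterate_injOn_Iio_minimalPeriod (fun i _ ↦ hadj i) hwn
  obtain heven | hodd := Nat.even_or_odd n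
  · refine hsum ?_
    rw [Finset.sum_congr rfl fun i _ ↦ halt i, ← Finset.sum_mul, neg_one_geom_sum, if_pos heven,
      zero_mul]
  · have hfirst := halt n
    rw [hw, hwn, ← hw, hodd.neg_one_pow, neg_one_mul, eq_neg_iff_add_eq_zero] at hfirst
    exact two_mul_label_ne_zero _ (hadj 0) hfirst

/-- If `u` has degree three, then its edges other than `uv` have equal labels. -/
def IsGoodAt (G : LabelledGraph V) (u v : V) : Prop :=
  4 ≤ G.degree u ∨ ∃ a b, G.IsCubic u v a b ∧ G.label u a = G.label u b

theorem label_eq_or_eq_or_eq : ∀ r s t : ZMod 3, r ≠ 0 → s ≠ 0 → t ≠ 0 →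
    r = s ∨ s = t ∨ t = r := by decide

theorem exists_isGoodAt (hu : 3 ≤ G.degree u) : ∃ v, G.Adj u v ∧ G.IsGoodAt u v := by
  obtain hu | hu := hu.eq_or_lt
  · obtain ⟨a, b, c, h⟩ := exists_isCubic hu.symm
    obtain heq | heq | heq := label_eq_or_eq_or_eq _ _ _ h.adj₁ h.adj₂ h.adj₃
    · exact ⟨c, h.adj₃, .inr ⟨a, b, h.rotate.rotate, heq⟩⟩
    · exact ⟨a, h.adj₁, .inr ⟨b, c, h, heq⟩⟩
    · exact ⟨b, h.adj₂, .inr ⟨c, a, h.rotate, heq⟩⟩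
  · obtain ⟨v, huv⟩ := Set.nonempty_of_ncard_ne_zero (s := G.neighborSet u) (Nat.ne_zero_of_lt hu)
    exact ⟨v, huv, .inl hu⟩

theorem IsGoodAt.of_label_eq (h : G.IsGoodAt u v) (huw : G.Adj u w)
    (hlabel : G.label u v = G.label u w) : G.IsGoodAt u w := by
  obtain h | ⟨a, b, h, hab⟩ := h
  · exact .inl h
  obtain rfl | rfl | rfl := h.adj_iff.1 huw
  · exact .inr ⟨a, b, h, hab⟩
  · exact .inr ⟨b, v, h.rotate, by rw [← hab, hlabel]⟩
  · exact .inr ⟨v, a, h.rotate.rotate, by rw [hab, hlabel]⟩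

theorem ZeroCycleFree.exists_isGoodAt [Finite V] (hG : G.ZeroCycleFree)
    (hne : G.support.Nonempty) (hdeg : ∀ v ∈ G.support, 3 ≤ G.degree v) :
    ∃ u v, G.Adj u v ∧ G.IsGoodAt u v ∧ G.IsGoodAt v u := by
  have h u : ∃ v, u ∈ G.support → G.Adj u v ∧ G.IsGoodAt u v := by
    by_cases hu : u ∈ G.support
    · exact (LabelledGraph.exists_isGoodAt (hdeg u hu)).imp fun _ hv _ ↦ hv
    · exact ⟨u, fun h ↦ absurd h hu⟩
  choose o ho using h
  obtain ⟨u, hu, hlabel⟩ := hG.exists_label_eq hne fun v hv ↦ (ho v hv).1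
  obtain ⟨hadj, hgood⟩ := ho u hu
  refine ⟨u, o u, hadj, hgood, (ho _ hadj.right_mem_support).2.of_label_eq hadj.symm ?_⟩
  rw [hlabel, G.label_comm]

end GoodEdge

section Contraction

open Classical in
/-- Contract the path `b c o` to its end `b`: the vertices `c` and `o` become isolated, while `b`
inherits the edges of `o`. Where `b` and `o` have a common neighbour, the edge of `b` prevails. -/
noncomputable def contract (G : LabelledGraph V) (c o b : V) : LabelledGraph V where
  label u v :=
    if u = c ∨ u = o ∨ v = c ∨ v = o ∨ u = v then 0
    else if u = b then if G.Adj b v then G.label b v else G.label o v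
    else if v = b then if G.Adj b u then G.label b u else G.label o u
    else G.label u v
  label_comm u v := by
    have := G.label_comm u v
    grind
  label_self v := by simp

open Classical in
theorem contract_label (G : LabelledGraph V) (c o b u v : V) :
    (G.contract c o b).label u v =
      if u = c ∨ u = o ∨ v = c ∨ v = o ∨ u = v then 0
      else if u = b then if G.Adj b v then G.label b v else G.label o v
      else if v = b then if G.Adj b u then G.label b u else G.label o u
      else G.label u v := rfl

theorem contract_adj_iff : (G.contract c o b).Adj b v ↔
    b ≠ c ∧ b ≠ o ∧ v ≠ c ∧ v ≠ o ∧ v ≠ b ∧ (G.Adj b v ∨ G.Adj o v) := by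
  grind [contract_label]

theorem contract_adj_iff_of_ne (hu : u ≠ b) (hv : v ≠ b) : (G.contract c o b).Adj u v ↔
    u ≠ c ∧ u ≠ o ∧ v ≠ c ∧ v ≠ o ∧ G.Adj u v := by
  have := G.label_self u
  grind [contract_label]

theorem ne_of_mem_contract_support (h : v ∈ (G.contract c o b).support) : v ≠ c ∧ v ≠ o := by
  obtain ⟨u, hvu⟩ := h
  grind [contract_label]

theorem ZeroCycleFree.contract (hG : G.ZeroCycleFree) (hcb : G.Adj c b) (hco : G.Adj c o)
    (hbo : b ≠ o) (hlabel : G.label c b + G.label c o = 0) :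
    (G.contract c o b).ZeroCycleFree := by
  refine hG.of_agree_off b (fun u v hu hv h ↦ by grind [contract_label]) ?_
  intro x y W s hbx hyb hxy hbW p' p
  have hsupp := p'.subset_support hxy
  have hcW : c ∉ W := fun hc ↦ (ne_of_mem_contract_support (hsupp hc)).1 rfl
  have hoW : o ∉ W := fun ho ↦ (ne_of_mem_contract_support (hsupp ho)).2 rfl
  have hmixed {x y s} (p : G.HasPath x y W s) (hbx : G.Adj b x) (hyo : G.Adj y o) :
      G.label b x + s + G.label y o ≠ 0 := by
    have p := (p.concat hyo hoW).concat hco.symm (by simp [hcW, hco.ne])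
    have := hG (p.cons hbx (by simp [hbW, hbo, hcb.ne.symm])) hcb
    rw [G.label_comm o c] at this
    intro h
    exact this (by linear_combination h + hlabel)
  have hcases {z} (hbz : (G.contract c o b).Adj b z) :
      (G.contract c o b).label b z = G.label b z ∧ G.Adj b z ∨
        (G.contract c o b).label b z = G.label o z ∧ G.Adj o z := by
    grind [contract_label]
  rw [label_comm _ y b]
  obtain ⟨hx, hbx⟩ | ⟨hx, hox⟩ := hcases hbx <;>
    obtain ⟨hy, hby⟩ | ⟨hy, hoy⟩ := hcases hyb.symm <;> rw [hx, hy]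
  · rw [G.label_comm b y]
    exact hG (p.cons hbx hbW) hby.symm
  · rw [G.label_comm o y]
    exact hmixed p hbx hoy.symm
  · have := hmixed p.reverse hby hox.symm
    rw [G.label_comm x o] at this
    convert this using 1
    ring
  · rw [G.label_comm o y]
    exact hG (p.cons hox hoW) hoy.symm

/-- The cubic vertex `c` lies in the triangle `c o d`, and its path `b c o` has label sum `0`; the
further conditions ensure that the contraction of that path is admissible. -/
structure IsContractible (G : LabelledGraph V) (c o b d : V) : Prop where
  isCubic : G.IsCubic c b o d
  label_add_label : G.label c b + G.label c o = 0
  adj : G.Adj o d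
  not_adj_left : ¬G.Adj b o
  not_adj_right : ¬G.Adj b d
  four_le_degree : ∀ v, v ≠ c → v ≠ d → G.Adj o v → G.Adj b v → 4 ≤ G.degree v
  degree_or_isCubic : 4 ≤ G.degree d ∨
    ∃ a, G.IsCubic d c o a ∧ G.label d a = G.label o d ∧ ¬G.Adj b a ∧ ¬G.Adj o a

namespace IsContractible

theorem contract_support_subset (h : G.IsContractible c o b d) :
    (G.contract c o b).support ⊆ G.support \ {c} := by
  intro v hv
  refine ⟨?_, (ne_of_mem_contract_support hv).1⟩
  obtain ⟨u, hvu⟩ := hv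
  have := h.isCubic.adj₁.right_mem_support
  have hleft {u v} := Adj.left_mem_support (G := G) (a := u) (b := v)
  have hright {u v} := Adj.right_mem_support (G := G) (a := u) (b := v)
  grind [contract_label]

theorem contract_adj (h : G.IsContractible c o b d) : (G.contract c o b).Adj b d := by
  have := h.isCubic
  exact contract_adj_iff.2 ⟨this.adj₁.ne.symm, this.ne₁₂, this.adj₃.ne.symm, this.ne₂₃.symm,
    this.ne₁₃.symm, .inr h.adj⟩

theorem connectedAvoiding_contract_left (h : G.IsContractible c o b d) (hG : G.IsThreeConnected) :
    (G.contract c o b).ConnectedAvoiding {b} := by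
  intro S hS x y hx hy hxS
  have hc := h.isCubic
  have hsupp := h.contract_support_subset
  have hclosed : G.ClosedAvoiding {b, o} {v | v ≠ c ∧ v ∈ S ∨ v = c ∧ d ∈ S} := by
    intro u v hu hv huS huv
    rw [Set.mem_insert_iff, Set.mem_singleton_iff, not_or] at hu hv
    have huv' := hc.adj_iff (v := v)
    have hvu' := hc.adj_iff (v := u)
    have := hS (u := u) (v := v) hu.1 hv.1
    grind [contract_adj_iff_of_ne, Adj.symm]
  have hne {z} (hz : z ∈ (G.contract c o b).support \ {b}) : z ∈ G.support \ {b, o} :=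
    ⟨(hsupp hz.1).1, not_or_intro hz.2 (ne_of_mem_contract_support hz.1).2⟩
  have := hG hc.adj₁.right_mem_support h.adj.left_mem_support hc.ne₁₂ hclosed (hne hx) (hne hy)
    (.inl ⟨(hsupp hx.1).2, hxS⟩)
  exact (this.resolve_right fun hyc ↦ (hsupp hy.1).2 hyc.1).2

theorem connectedAvoiding_contract (h : G.IsContractible c o b d) (hG : G.IsTwoConnected)
    (hw : w ∈ (G.contract c o b).support) (hwb : w ≠ b) :
    (G.contract c o b).ConnectedAvoiding {w} := by
  intro S hS x y hx hy hxS
  have hc := h.isCubic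
  have hsupp := h.contract_support_subset
  have hclosed : G.ClosedAvoiding {w} {v | (v ≠ c ∧ v ≠ o) ∧ v ∈ S ∨ (v = c ∨ v = o) ∧ b ∈ S} := by
    intro u v hu hv huS huv
    have huv' := hc.adj_iff (v := v)
    have hvu' := hc.adj_iff (v := u)
    have hbc := hc.adj₁.ne
    have hbo := hc.ne₁₂
    have hbd := h.contract_adj
    have := hS (u := u) (v := v) hu hv
    have := hS (u := b) (v := v) hwb.symm hv
    have := hS (u := u) (v := b) hu hwb.symm
    have := huv.symm
    have := huv.ne
    have := hbd.symm
    have := contract_adj_iff (G := G) (c := c) (o := o) (b := b) (v := v)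
    have := contract_adj_iff (G := G) (c := c) (o := o) (b := b) (v := u)
    have := contract_adj_iff_of_ne (G := G) (c := c) (o := o) (b := b) (u := u) (v := v)
    grind [Adj.symm]
  have := hG (hsupp hw).1 hclosed ⟨(hsupp hx.1).1, hx.2⟩ ⟨(hsupp hy.1).1, hy.2⟩
    (.inl ⟨ne_of_mem_contract_support hx.1, hxS⟩)
  obtain ⟨-, hyS⟩ | ⟨hyc, -⟩ := this
  · exact hyS
  · exact absurd hyc (not_or.2 (ne_of_mem_contract_support hy.1))

theorem isTwoConnected_contract (h : G.IsContractible c o b d) (hG : G.IsTwoConnected)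
    (hG' : G.IsThreeConnected) : (G.contract c o b).IsTwoConnected := by
  intro w hw
  obtain rfl | hwb := eq_or_ne w b
  · exact h.connectedAvoiding_contract_left hG'
  · exact h.connectedAvoiding_contract hG hw hwb

theorem contract_adj_iff_of_ne_center (h : G.IsContractible c o b d) (hvc : v ≠ c) (hvo : v ≠ o)
    (hvb : v ≠ b) : (G.contract c o b).Adj v u ↔
      u = b ∧ (G.Adj b v ∨ G.Adj o v) ∨ u ≠ b ∧ u ≠ c ∧ u ≠ o ∧ G.Adj v u := by
  have := h.isCubic.adj₁.ne
  have := h.isCubic.ne₁₂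
  by_cases hub : u = b
  · subst hub
    grind [contract_adj_iff, Adj.symm]
  · grind [contract_adj_iff_of_ne]

variable [Finite V]

theorem three_le_degree_left (h : G.IsContractible c o b d) (hb : 3 ≤ G.degree b) :
    3 ≤ (G.contract c o b).degree b := by
  have hsub : insert d (G.neighborSet b \ {c}) ⊆ (G.contract c o b).neighborSet b := by
    refine Set.insert_subset h.contract_adj fun v hv ↦ contract_adj_iff.2 ?_
    have hne : v ≠ o := fun hvo ↦ h.not_adj_left (hvo ▸ hv.1)
    exact ⟨h.isCubic.adj₁.ne.symm, h.isCubic.ne₁₂, hv.2, hne, hv.1.ne.symm, .inl hv.1⟩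
  refine le_trans ?_ (Set.ncard_le_ncard hsub)
  rwa [Set.ncard_exchange h.not_adj_right h.isCubic.adj₁.symm]

theorem three_le_degree (h : G.IsContractible c o b d) (hv : 3 ≤ G.degree v) (hvc : v ≠ c)
    (hvo : v ≠ o) (hvb : v ≠ b) (hvd : v ≠ d) : 3 ≤ (G.contract c o b).degree v := by
  have hcv : ¬G.Adj c v := by simp [h.isCubic.adj_iff, *]
  have hadj u := h.contract_adj_iff_of_ne_center hvc hvo hvb (u := u)
  have hsub : G.neighborSet v \ {o} ⊆ (G.contract c o b).neighborSet v := by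
    rintro u ⟨hvu, huo : u ≠ o⟩
    have huc : u ≠ c := fun huc ↦ hcv (huc ▸ hvu.symm)
    have := Adj.symm hvu
    grind [mem_neighborSet]
  by_cases hov : G.Adj o v
  · by_cases hbv : G.Adj b v
    · have := h.four_le_degree v hvc hvd hov hbv
      refine le_trans ?_ (Set.ncard_le_ncard hsub)
      rw [Set.ncard_sdiff_singleton_of_mem hov.symm]
      exact Nat.le_sub_one_of_lt this
    · have hb : (G.contract c o b).Adj v b := (hadj b).2 (.inl ⟨rfl, .inr hov⟩)
      refine le_trans ?_ (Set.ncard_le_ncard (Set.insert_subset hb hsub))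
      rwa [Set.ncard_exchange (fun h ↦ hbv h.symm) hov.symm]
  · rw [Set.sdiff_singleton_eq_self fun h ↦ hov h.symm] at hsub
    exact hv.trans (Set.ncard_le_ncard hsub)

theorem three_le_degree_or_isSuppressible (h : G.IsContractible c o b d)
    (hdeg : ∀ v ∈ G.support, 3 ≤ G.degree v) :
    3 ≤ (G.contract c o b).degree d ∨ ∃ a, (G.contract c o b).IsSuppressible d b a := by
  have hc := h.isCubic
  have hadj u := h.contract_adj_iff_of_ne_center hc.adj₃.ne.symm hc.ne₂₃.symm hc.ne₁₃.symm (u := u)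
  have hbd := h.contract_adj.symm
  refine h.degree_or_isCubic.imp (fun hd ↦ ?_) fun ⟨a, hd, hlabel, hba, hoa⟩ ↦ ⟨a, ?_⟩
  · have hsub : insert b ((G.neighborSet d \ {c}) \ {o}) ⊆ (G.contract c o b).neighborSet d := by
      refine Set.insert_subset hbd fun u hu ↦ (hadj u).2 (.inr ⟨?_, hu.1.2, hu.2, hu.1.1⟩)
      rintro rfl
      exact h.not_adj_right hu.1.1.symm
    have ho : o ∈ G.neighborSet d \ {c} := ⟨h.adj.symm, hc.adj₂.ne.symm⟩
    refine le_trans ?_ (Set.ncard_le_ncard hsub)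
    rw [Set.ncard_insert_of_notMem fun hb ↦ h.not_adj_right (Adj.symm hb.1.1),
      Set.ncard_sdiff_singleton_of_mem ho,
      Set.ncard_sdiff_singleton_of_mem hc.adj₃.symm]
    exact (by omega : 3 ≤ G.degree d - 1 - 1 + 1)
  · have hab : a ≠ b := fun hab ↦ h.not_adj_right (hab ▸ hd.adj₃.symm)
    have hN : (G.contract c o b).neighborSet d = {b, a} := by
      ext u
      have := hd.adj_iff (v := u)
      have := h.adj
      have := hd.ne₁₃
      have := hd.ne₂₃
      grind [mem_neighborSet]
    have hda : (G.contract c o b).Adj b a ↔ False := by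
      grind [contract_adj_iff]
    refine ⟨hab.symm, hN, ?_, hda.1, ?_, ?_⟩
    · have := h.not_adj_right
      have := hd.adj₃.ne
      grind [contract_label, hc.ne₁₂, hc.ne₁₃, hc.ne₂₃, hc.adj₁.ne, hc.adj₃.ne, hd.ne₁₃, hd.ne₂₃]
    · exact h.three_le_degree_left (hdeg b hc.adj₁.right_mem_support)
    · exact h.three_le_degree (hdeg a hd.adj₃.right_mem_support) hd.ne₁₃.symm hd.ne₂₃.symm hab
        hd.adj₃.ne.symm

theorem admissible_contract (h : G.IsContractible c o b d) (hG : G.ZeroCycleFree)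
    (hG₂ : G.IsTwoConnected) (hG₃ : G.IsThreeConnected) (hdeg : ∀ v ∈ G.support, 3 ≤ G.degree v) :
    (G.contract c o b).Admissible := by
  have hc := h.isCubic
  have hdeg' : ∀ v ∈ (G.contract c o b).support, v ≠ d → 3 ≤ (G.contract c o b).degree v := by
    intro v hv hvd
    have hvG := hdeg v (h.contract_support_subset hv).1
    obtain ⟨hvc, hvo⟩ := ne_of_mem_contract_support hv
    obtain rfl | hvb := eq_or_ne v b
    · exact h.three_le_degree_left hvG
    · exact h.three_le_degree hvG hvc hvo hvb hvd
  have heq {v} (hv : (G.contract c o b).degree v = 2) : v = d := by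
    by_contra hvd
    have := hdeg' v (degree_pos_iff.1 (by omega)) hvd
    omega
  refine ⟨hG.contract hc.adj₁ hc.adj₂ hc.ne₁₂ h.label_add_label, h.isTwoConnected_contract hG₂ hG₃,
    ⟨b, d, h.contract_adj⟩, fun v hv ↦ ?_, fun u v hu huv ↦ ?_⟩
  · obtain rfl | hvd := eq_or_ne v d
    · exact (h.three_le_degree_or_isSuppressible hdeg).imp_right fun ⟨a, ha⟩ ↦ ⟨b, a, ha⟩
    · exact .inl (hdeg' v hv hvd)
  · rw [heq hu, heq (v := v) (by rw [← hu, degree, ← huv, degree])]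

end IsContractible

theorem IsMinimal.not_isContractible [Finite V] (hG : G.IsMinimal) : ¬G.IsContractible c o b d := by
  intro h
  refine hG.not_admissible_of_size_lt (size_lt_of_ssubset_support ?_)
    (h.admissible_contract hG.admissible.zeroCycleFree hG.admissible.isTwoConnected
      hG.isThreeConnected fun v ↦ hG.three_le_degree)
  exact h.contract_support_subset.trans_ssubset
    (Set.sdiff_singleton_ssubset.2 h.isCubic.adj₁.left_mem_support)

end Contraction

section Triangle

variable {m x' y' z' : V}

theorem IsThreeConnected.eq_of_adj (hG : G.IsThreeConnected) (ha : G.IsCubic a b c m)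
    (hb : G.IsCubic b a c m) (hcq : G.Adj c q) : q = a ∨ q = b ∨ q = m := by
  by_contra! hq
  have hclosed : G.ClosedAvoiding {c, m} {a, b} := by
    intro u v _ hv huS huv
    have := ha.adj_iff (v := v)
    have := hb.adj_iff (v := v)
    grind
  have ha' : a ∈ G.support \ {c, m} :=
    ⟨ha.adj₁.left_mem_support, not_or_intro ha.adj₂.ne ha.adj₃.ne⟩
  have hq' : q ∈ G.support \ {c, m} := ⟨hcq.right_mem_support, not_or_intro hcq.ne.symm hq.2.2⟩
  have : q ∈ ({a, b} : Set V) := hG ha.adj₂.right_mem_support ha.adj₃.right_mem_support ha.ne₂₃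
    hclosed ha' hq' (.inl rfl)
  exact this.elim hq.1 hq.2.1

/-- A triangle whose edges `xy` and `xz` have the same label, opposite to the label of `yz`. Every
triangle of a graph without zero cycles is of this form for some order of its vertices. -/
structure IsIsosceles (G : LabelledGraph V) (x y z : V) : Prop where
  adj : G.Adj x y
  label_eq : G.label x z = G.label x y
  label_eq_neg : G.label y z = -G.label x y

theorem ZeroCycleFree.isIsosceles (hG : G.ZeroCycleFree) (hxy : G.Adj x y) (hyz : G.Adj y z)
    (h : G.label x y = G.label x z) : G.IsIsosceles x y z := by
  have hzx : G.Adj z x := (hxy.congr h).symm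
  refine ⟨hxy, h.symm, eq_neg_of_ne _ _ hyz hxy fun heq ↦ hG.triangle hxy hyz hzx ?_⟩
  rw [G.label_comm z x, ← h, heq]
  linear_combination G.label x y * (by decide : (3 : ZMod 3) = 0)

namespace IsIsosceles

theorem swap (h : G.IsIsosceles x y z) : G.IsIsosceles x z y :=
  ⟨h.adj.congr h.label_eq.symm, h.label_eq.symm, by
    rw [G.label_comm, h.label_eq_neg, h.label_eq]⟩

theorem adj_base (h : G.IsIsosceles x y z) : G.Adj y z := by
  rw [Adj, h.label_eq_neg]
  exact neg_ne_zero.2 h.adj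

theorem not_adj (h : G.IsIsosceles x y z) (hG : G.ZeroCycleFree)
    (hx : G.label x x' = -G.label x y) (hy : G.label y y' = -G.label x y)
    (hx'y : x' ≠ y) (hx'z : x' ≠ z) (hy'x : y' ≠ x) (hy'z : y' ≠ z) : ¬G.Adj x' y' := by
  intro hadj
  have hxx' : G.Adj x x' := by rw [Adj, hx]; exact neg_ne_zero.2 h.adj
  have hyy' : G.Adj y y' := by rw [Adj, hy]; exact neg_ne_zero.2 h.adj
  have h₄ := hG.square hxx'.symm h.adj hyy' hadj.symm hx'y hy'x.symm
  have h₅ := hG.pentagon hxx'.symm h.swap.adj h.adj_base.symm hyy' hadj.symm (by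
    simp only [List.nodup_cons, List.mem_cons, List.not_mem_nil, or_false, not_or]
    have := hxx'.ne
    have := h.adj.ne
    have := h.swap.adj.ne
    have := h.adj_base.ne
    have := hyy'.ne
    have := hadj.ne
    grind)
  rw [G.label_comm x' x, G.label_comm y' x', hx, hy] at h₄
  rw [G.label_comm x' x, G.label_comm y' x', G.label_comm z y, hx, hy, h.label_eq,
    h.label_eq_neg] at h₅
  have : ∀ t e : ZMod 3, t ≠ 0 → e ≠ 0 → -t + t + -t + e ≠ 0 →
      -t + t + -t + -t + e ≠ 0 → False := by
    decide
  exact this _ _ h.adj hadj h₄ h₅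

theorem false_of_adj (h : G.IsIsosceles x y z) (hG : G.ZeroCycleFree) (hx : G.Adj x w)
    (hy : G.Adj y w) (hz : G.Adj z w) : False := by
  have hyz := h.adj_base
  have h₁ := hG.triangle h.adj hy hx.symm
  have h₂ := hG.triangle hyz hz hy.symm
  have h₃ := hG.square h.adj hyz hz hx.symm h.swap.adj.ne hy.ne
  have h₄ := hG.square h.swap.adj hyz.symm hy hx.symm h.adj.ne hz.ne
  rw [G.label_comm w x] at h₁ h₃ h₄
  rw [G.label_comm w y, h.label_eq_neg] at h₂
  rw [h.label_eq_neg] at h₃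
  rw [G.label_comm z y, h.label_eq_neg, h.label_eq] at h₄
  have : ∀ t a b c : ZMod 3, t ≠ 0 → a ≠ 0 → b ≠ 0 → c ≠ 0 → t + b + a ≠ 0 → -t + c + b ≠ 0 →
      t + -t + c + a ≠ 0 → t + -t + b + a ≠ 0 → False := by
    decide
  exact this _ _ _ _ h.adj hx hy hz h₁ h₂ h₃ h₄

end IsIsosceles

namespace IsMinimal

variable [Finite V]

theorem label_eq_neg (hG : G.IsMinimal) (hu : G.IsDeletableAt u v) (hv : G.IsCubic v u a b)
    (hab : ¬G.Adj a b) : G.label v b = -G.label v a :=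
  eq_neg_of_ne _ _ hv.adj₃ hv.adj₂ fun heq ↦
    hG.not_isDeletableAt hv.adj₁.symm hu (.inr ⟨a, b, hv, heq.symm, hab⟩)

theorem not_adj_of_isGoodAt (hG : G.IsMinimal) (h : G.IsIsosceles x y z) (hx : G.IsCubic x x' y z)
    (hyx' : ¬G.Adj y x') (hlabel : G.label x x' = -G.label x y) (hz : 4 ≤ G.degree z)
    (hgood : G.IsGoodAt x' x) : ¬G.Adj x' z := by
  intro hadj
  refine hG.not_isDeletableAt hadj.symm (.inl hz) ?_
  obtain hx' | ⟨a, b, hx', hab⟩ := hgood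
  · exact .inl hx'
  obtain ⟨w, hx', hzw⟩ : ∃ w, G.IsCubic x' x z w ∧ G.label x' z = G.label x' w := by
    obtain rfl | rfl | rfl := hx'.adj_iff.1 hadj
    exacts [absurd rfl hx.adj₃.ne, ⟨b, hx', hab⟩, ⟨a, hx'.swap, hab.symm⟩]
  have hzx : G.label x' z = G.label x' x := by
    rw [G.label_comm x' x, hlabel]
    refine eq_neg_of_ne _ _ hadj h.adj fun heq ↦ ?_
    refine hG.admissible.zeroCycleFree.square hx.adj₁.symm h.adj h.adj_base hadj.symm hx.ne₁₂
      hx.adj₃.ne ?_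
    rw [G.label_comm x' x, G.label_comm z x', heq, hlabel, h.label_eq_neg]
    ring
  refine .inr ⟨w, x, hx'.rotate, by rw [← hzw, hzx], fun hwx ↦ ?_⟩
  obtain rfl | rfl | rfl := hx.adj_iff.1 hwx.symm
  exacts [hx'.adj₃.ne rfl, hyx' hx'.adj₃.symm, hx'.ne₂₃ rfl]

theorem not_isIsosceles_of_four_le_degree (hG : G.IsMinimal) (hx : G.IsCubic x x' y z)
    (hy : G.IsCubic y y' z x) (hz : 4 ≤ G.degree z) (hgood : G.IsGoodAt x' x) :
    ¬G.IsIsosceles x y z := by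
  intro h
  have hx'y' : x' ≠ y' := by
    rintro rfl
    obtain ⟨q, hzq, hqx, hqy, hqx'⟩ := exists_adj_of_four_le_degree hz x y x'
    exact (hG.isThreeConnected.eq_of_adj hx.rotate hy.rotate.rotate.swap hzq).elim hqx (by tauto)
  have hyx' : ¬G.Adj y x' := by
    simp [hy.adj_iff, hx'y', hx.ne₁₃, hx.adj₁.ne.symm]
  have hxy' : ¬G.Adj x y' := by
    simp [hx.adj_iff, hx'y'.symm, hy.ne₁₂, hy.adj₁.ne.symm]
  have hlabel := hG.label_eq_neg (.inl hz) hx.rotate.rotate.swap hyx'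
  have hlabel' := hG.label_eq_neg (.inl hz) hy.rotate hxy'
  rw [G.label_comm y x] at hlabel'
  have hx'y'_adj := h.not_adj hG.admissible.zeroCycleFree hlabel hlabel' hx.ne₁₂ hx.ne₁₃ hy.ne₁₃
    hy.ne₁₂
  refine hG.not_isContractible (c := x) (b := x') (o := y) (d := z) ⟨hx, ?_, h.adj_base,
    fun hadj ↦ hyx' hadj.symm, hG.not_adj_of_isGoodAt h hx hyx' hlabel hz hgood, ?_, .inl hz⟩
  · rw [hlabel, neg_add_cancel]
  · intro v hvx hvz hyv hx'v
    obtain rfl | rfl | rfl := hy.adj_iff.1 hyv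
    exacts [absurd hx'v hx'y'_adj, absurd rfl hvz, absurd rfl hvx]

end IsMinimal

/-- A triangle `x y z` of cubic vertices whose third neighbours `x'`, `y'`, `z'` are distinct. -/
structure IsNet (G : LabelledGraph V) (x y z x' y' z' : V) : Prop where
  isCubic₁ : G.IsCubic x x' y z
  isCubic₂ : G.IsCubic y y' z x
  isCubic₃ : G.IsCubic z z' x y
  ne₁₂ : x' ≠ y'
  ne₂₃ : y' ≠ z'
  ne₃₁ : z' ≠ x'

namespace IsNet

theorem rotate (h : G.IsNet x y z x' y' z') : G.IsNet y z x y' z' x' :=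
  ⟨h.isCubic₂, h.isCubic₃, h.isCubic₁, h.ne₂₃, h.ne₃₁, h.ne₁₂⟩

theorem swap (h : G.IsNet x y z x' y' z') : G.IsNet x z y x' z' y' :=
  ⟨h.isCubic₁.swap, h.isCubic₃.swap, h.isCubic₂.swap, h.ne₃₁.symm, h.ne₂₃.symm, h.ne₁₂.symm⟩

theorem not_adj (h : G.IsNet x y z x' y' z') : ¬G.Adj x y' := by
  simp [h.isCubic₁.adj_iff, h.ne₁₂.symm, h.isCubic₂.ne₁₂, h.isCubic₂.adj₁.ne.symm]

theorem isDeletableAt (h : G.IsNet x y z x' y' z') (heq : G.label x x' = G.label x z) :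
    G.IsDeletableAt x y :=
  .inr ⟨z, x', h.isCubic₁.rotate, heq.symm, h.rotate.rotate.not_adj⟩

theorem isContractible (h : G.IsNet x y z x' y' z') (hx : G.label x x' + G.label x z = 0)
    (hy : G.label y y' = G.label z y) (hadj : ¬G.Adj x' y')
    (hdeg : G.Adj x' z' → 4 ≤ G.degree z') : G.IsContractible x z x' y where
  isCubic := h.isCubic₁.swap
  label_add_label := hx
  adj := h.isCubic₃.adj₃
  not_adj_left := fun h' ↦ h.rotate.rotate.not_adj h'.symm
  not_adj_right := fun h' ↦ h.swap.rotate.rotate.not_adj h'.symm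
  four_le_degree := by
    intro v hvx hvy hzv hx'v
    obtain rfl | rfl | rfl := h.isCubic₃.adj_iff.1 hzv
    exacts [hdeg hx'v, absurd rfl hvx, absurd rfl hvy]
  degree_or_isCubic :=
    .inr ⟨y', h.isCubic₂.rotate.rotate.swap, hy, hadj, h.swap.rotate.not_adj⟩

theorem not_isCubic [Finite V] (h : G.IsNet x y z x' y' z') (hG : G.IsThreeConnected)
    (hy' : 3 ≤ G.degree y') (hadj : ¬G.Adj x' y') : ¬G.IsCubic z' z x' y' := by
  intro hz'
  obtain ⟨u, hy'u, huy, huz'⟩ := exists_adj_of_three_le_degree hy' y z'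
  have hclosed : G.ClosedAvoiding {x', y'} {x, y, z, z'} := by
    intro u v _ hv huS huv
    have := h.isCubic₁.adj_iff (v := v)
    have := h.isCubic₂.adj_iff (v := v)
    have := h.isCubic₃.adj_iff (v := v)
    have := hz'.adj_iff (v := v)
    grind
  have hux' : u ≠ x' := fun hux ↦ hadj (hux ▸ hy'u.symm)
  have hx : x ∈ G.support \ {x', y'} := ⟨h.isCubic₁.adj₁.left_mem_support,
    not_or_intro h.isCubic₁.adj₁.ne h.isCubic₂.ne₁₃.symm⟩
  have hu : u ∈ G.support \ {x', y'} := ⟨hy'u.right_mem_support, not_or_intro hux' hy'u.ne.symm⟩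
  have : u ∈ ({x, y, z, z'} : Set V) := hG h.isCubic₁.adj₁.right_mem_support
    h.isCubic₂.adj₁.right_mem_support h.ne₁₂ hclosed hx hu (.inl rfl)
  obtain rfl | rfl | rfl | rfl := this
  exacts [h.not_adj hy'u.symm, huy rfl, h.swap.rotate.not_adj hy'u.symm, huz' rfl]

end IsNet

variable [Finite V]

namespace IsMinimal

theorem label_eq_neg_of_isNet (hG : G.IsMinimal) (h : G.IsNet x y z x' y' z')
    (heq : G.label x x' = G.label x z) : G.label y y' = -G.label y z :=
  eq_neg_of_ne _ _ h.isCubic₂.adj₁ h.isCubic₂.adj₂ fun heq' ↦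
    hG.not_isDeletableAt h.isCubic₁.adj₂ (h.isDeletableAt heq)
      (h.swap.rotate.rotate.isDeletableAt heq')

theorem adj_and_degree_eq_three (hG : G.IsMinimal) (h : G.IsNet x y z x' y' z')
    (hx : G.label x x' + G.label x z = 0) (hy : G.label y y' = G.label z y)
    (hadj : ¬G.Adj x' y') : G.Adj x' z' ∧ G.degree z' = 3 := by
  have hcontr (hdeg : G.Adj x' z' → 4 ≤ G.degree z') : False :=
    hG.not_isContractible (h.isContractible hx hy hadj hdeg)
  have hx'z' : G.Adj x' z' := fun hx'z' ↦ hcontr fun hadj ↦ absurd hx'z' hadj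
  have hdeg : ¬4 ≤ G.degree z' := fun hdeg ↦ hcontr fun _ ↦ hdeg
  exact ⟨hx'z', by have := hG.three_le_degree hx'z'.right_mem_support; omega⟩

theorem not_isIsosceles_of_label_eq_neg (hG : G.IsMinimal) (h : G.IsNet x y z x' y' z')
    (hx : G.label x x' = -G.label x y) (hy : G.label y y' = -G.label x y) :
    ¬G.IsIsosceles x y z := by
  intro hxyz
  have hcyc := hG.admissible.zeroCycleFree
  have hx'y' := hxyz.not_adj hcyc hx hy h.isCubic₁.ne₁₂ h.isCubic₁.ne₁₃ h.isCubic₂.ne₁₃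
    h.isCubic₂.ne₁₂
  obtain ⟨hx'z', hz'⟩ := hG.adj_and_degree_eq_three h (by rw [hx, hxyz.label_eq, neg_add_cancel])
    (by rw [hy, G.label_comm z y, hxyz.label_eq_neg]) hx'y'
  have hz : G.label z z' = G.label x z := by
    rw [← neg_neg (G.label x z)]
    refine eq_neg_of_ne _ _ h.isCubic₃.adj₁ (neg_ne_zero.2 hxyz.swap.adj) fun hz ↦ ?_
    exact hxyz.swap.not_adj hcyc (by rw [hx, hxyz.label_eq]) hz h.isCubic₁.ne₁₃ h.isCubic₁.ne₁₂
      h.isCubic₃.ne₁₂ h.isCubic₃.ne₁₃ hx'z'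
  have hy'z' : ¬G.Adj y' z' := by
    intro hy'z'
    obtain ⟨c, hc⟩ := exists_isCubic_of_adj hz' hx'z'.symm hy'z'.symm h.ne₁₂
    have hy' := hG.three_le_degree hy'z'.left_mem_support
    obtain rfl | rfl | rfl := hc.adj_iff.1 h.isCubic₃.adj₁.symm
    exacts [h.not_isCubic hG.isThreeConnected hy' hx'y' hc, h.isCubic₁.ne₁₃ rfl,
      h.isCubic₂.ne₁₂ rfl]
  have := (hG.adj_and_degree_eq_three h.rotate (by rw [hy, G.label_comm y x, neg_add_cancel])
    hz hy'z').1
  exact hx'y' this.symm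

theorem not_isIsosceles_of_isNet (hG : G.IsMinimal) (h : G.IsNet x y z x' y' z') :
    ¬G.IsIsosceles x y z := by
  intro hxyz
  have hxz := hxyz.label_eq
  have hyz := hxyz.label_eq_neg
  have hzx := G.label_comm z x
  have hyx := G.label_comm y x
  have hyz_net (hy : G.label y y' = G.label x y) : G.label z z' = -G.label x y := by
    rw [hG.label_eq_neg_of_isNet h.rotate (by rw [hy, hyx]), hzx, hxz]
  have hx : G.label x x' = -G.label x y := by
    refine eq_neg_of_ne _ _ h.isCubic₁.adj₁ hxyz.adj fun hx ↦ ?_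
    have hy := hG.label_eq_neg_of_isNet h (by rw [hx, hxz])
    have hz := hG.label_eq_neg_of_isNet h.swap hx
    rw [hyz, neg_neg] at hy
    rw [G.label_comm z y, hyz, neg_neg, hyz_net hy, neg_eq_iff_add_eq_zero] at hz
    exact two_mul_label_ne_zero _ hxyz.adj hz
  by_cases hy : G.label y y' = G.label x y
  · exact hG.not_isIsosceles_of_label_eq_neg h.swap (by rw [hx, hxz]) (by rw [hyz_net hy, hxz])
      hxyz.swap
  · exact hG.not_isIsosceles_of_label_eq_neg h hx
      (eq_neg_of_ne _ _ h.isCubic₂.adj₁ hxyz.adj hy) hxyz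

theorem isNet (hG : G.IsMinimal) (hx : G.IsCubic x x' y z) (hy : G.IsCubic y y' z x)
    (hz : G.IsCubic z z' x y) (h : G.IsIsosceles x y z) : G.IsNet x y z x' y' z' := by
  have hG₃ := hG.isThreeConnected
  have hne₁₂ : x' ≠ y' := by
    rintro rfl
    obtain rfl | rfl | hz'x' := hG₃.eq_of_adj hx.rotate hy.rotate.rotate.swap hz.adj₁
    · exact hz.ne₁₂ rfl
    · exact hz.ne₁₃ rfl
    · rw [hz'x'] at hz
      exact h.false_of_adj hG.admissible.zeroCycleFree hx.adj₁ hy.adj₁ hz.adj₁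
  refine ⟨hx, hy, hz, hne₁₂, ?_, ?_⟩
  · rintro rfl
    obtain rfl | rfl | rfl := hG₃.eq_of_adj hy.rotate hz.rotate.rotate.swap hx.adj₁
    exacts [hx.ne₁₂ rfl, hx.ne₁₃ rfl, hne₁₂ rfl]
  · rintro rfl
    obtain rfl | rfl | rfl := hG₃.eq_of_adj hz.rotate hx.rotate.rotate.swap hy.adj₁
    exacts [hy.ne₁₂ rfl, hy.ne₁₃ rfl, hne₁₂ rfl]

theorem not_isIsosceles_of_degree_eq_three (hG : G.IsMinimal) (hx : G.IsCubic x x' y z)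
    (hy : G.degree y = 3) (hgood : G.IsGoodAt x' x) : ¬G.IsIsosceles x y z := by
  intro h
  obtain ⟨y', hy⟩ := exists_isCubic_of_adj hy h.adj_base h.adj.symm hx.adj₃.ne.symm
  obtain hz | hz := (hG.three_le_degree h.adj_base.right_mem_support).eq_or_lt
  · obtain ⟨z', hz⟩ := exists_isCubic_of_adj hz.symm h.swap.adj.symm h.adj_base.symm h.adj.ne
    exact hG.not_isIsosceles_of_isNet (hG.isNet hx hy hz h) h
  · exact hG.not_isIsosceles_of_four_le_degree hx hy hz hgood h

theorem isDeletableAt_of_isGoodAt (hG : G.IsMinimal) (h : G.IsGoodAt u v) (h' : G.IsGoodAt v u) :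
    G.IsDeletableAt u v := by
  obtain h | ⟨y, z, h, heq⟩ := h
  · exact .inl h
  refine .inr ⟨y, z, h, heq, fun hyz ↦ ?_⟩
  have hiso := hG.admissible.zeroCycleFree.isIsosceles h.adj₂ hyz heq
  obtain hy | hy := (hG.three_le_degree hyz.left_mem_support).eq_or_lt
  · exact hG.not_isIsosceles_of_degree_eq_three h hy.symm h' hiso
  obtain hz | hz := (hG.three_le_degree hyz.right_mem_support).eq_or_lt
  · exact hG.not_isIsosceles_of_degree_eq_three h.swap hz.symm h' hiso.swap
  · exact hG.not_isDeletableAt hyz (.inl hy) (.inl hz)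

end IsMinimal

theorem not_isMinimal : ¬G.IsMinimal := by
  intro hG
  obtain ⟨u, v, huv, hu, hv⟩ := hG.admissible.zeroCycleFree.exists_isGoodAt
    hG.admissible.support_nonempty fun v ↦ hG.three_le_degree
  exact hG.not_isDeletableAt huv (hG.isDeletableAt_of_isGoodAt hu hv)
    (hG.isDeletableAt_of_isGoodAt hv hu)

theorem not_admissible : ¬G.Admissible := fun hG ↦
  let ⟨_, hmin⟩ := hG.exists_isMinimal
  not_isMinimal hmin

end Triangle

section OfSimpleGraph

variable {G : SimpleGraph V} {u v a b : V}

open Classical in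
/-- The graph `G` with label `1` on each edge, so that a zero cycle is a cycle whose length is
divisible by `3`. -/
noncomputable def ofSimpleGraph (G : SimpleGraph V) : LabelledGraph V where
  label u v := if G.Adj u v then 1 else 0
  label_comm u v := by simp only [G.adj_comm]
  label_self u := if_neg G.irrefl

theorem ofSimpleGraph_adj : (ofSimpleGraph G).Adj u v ↔ G.Adj u v := by
  simp [Adj, ofSimpleGraph]

theorem ofSimpleGraph_label (h : G.Adj u v) : (ofSimpleGraph G).label u v = 1 := if_pos h

theorem ofSimpleGraph_neighborSet (G : SimpleGraph V) (v : V) :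
    (ofSimpleGraph G).neighborSet v = G.neighborSet v :=
  Set.ext fun _ ↦ ofSimpleGraph_adj

theorem ofSimpleGraph_degree (G : SimpleGraph V) (v : V) [Fintype (G.neighborSet v)] :
    (ofSimpleGraph G).degree v = G.degree v := by
  rw [degree, ofSimpleGraph_neighborSet, Set.ncard_eq_toFinset_card',
    ← G.card_neighborFinset_eq_degree]
  rfl

theorem HasPath.exists_isPath {U : Set V} {s : ZMod 3} (p : (ofSimpleGraph G).HasPath a b U s) :
    ∃ q : G.Walk a b, q.IsPath ∧ {v | v ∈ q.support} = U ∧ (q.length : ZMod 3) = s := by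
  induction p with
  | nil a => exact ⟨.nil, .nil, by simp, by simp⟩
  | cons h ha p ih =>
    obtain ⟨q, hq, rfl, rfl⟩ := ih
    have h' := ofSimpleGraph_adj.1 h
    refine ⟨.cons h' q, (q.cons_isPath_iff h').2 ⟨hq, ha⟩, by ext; simp, ?_⟩
    rw [q.length_cons, ofSimpleGraph_label h', Nat.cast_succ, add_comm]

theorem zeroCycleFree_ofSimpleGraph
    (hG : ¬∃ (u : V) (c : G.Walk u u), c.IsCycle ∧ 3 ∣ c.length) :
    (ofSimpleGraph G).ZeroCycleFree := by
  intro a b U s p hba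
  obtain ⟨q, hq, -, rfl⟩ := p.exists_isPath
  have hba := ofSimpleGraph_adj.1 hba
  rw [ofSimpleGraph_label hba]
  by_cases hmem : s(b, a) ∈ q.edges
  · rw [Sym2.eq_swap] at hmem
    rw [hq.length_eq_one_of_mem_edges hmem]
    decide
  · intro hs
    refine hG ⟨b, .cons hba q, (q.cons_isCycle_iff hba).2 ⟨hq, hmem⟩, ?_⟩
    rw [q.length_cons, ← ZMod.natCast_eq_zero_iff, Nat.cast_succ, hs]

theorem isTwoConnected_ofSimpleGraph
    (h : ∀ v a b, a ≠ v → b ≠ v → (G.deleteIncidenceSet v).Reachable a b) :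
    (ofSimpleGraph G).IsTwoConnected := by
  intro w _ S hS a b ha hb haS
  obtain ⟨p⟩ := h w a b ha.2 hb.2
  by_contra hbS
  obtain ⟨d, -, hd, hd'⟩ := p.exists_boundary_dart S haS hbS
  obtain ⟨hadj, hw, hw'⟩ := G.deleteIncidenceSet_adj.1 d.adj
  exact hd' (hS hw hw' hd (ofSimpleGraph_adj.2 hadj))

theorem ZeroCycleFree.exists_isSuppressible [G.LocallyFinite]
    (hG : (ofSimpleGraph G).ZeroCycleFree)
    (hv : G.degree v = 2) (h : ∀ u, G.Adj v u → 3 ≤ G.degree u) :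
    ∃ a b, (ofSimpleGraph G).IsSuppressible v a b := by
  obtain ⟨a, b, hab, hN⟩ := Set.ncard_eq_two.1 ((ofSimpleGraph_degree G v).trans hv)
  have hva := (adj_iff_of_neighborSet_eq_pair hN).2 (.inl rfl)
  have hvb := (adj_iff_of_neighborSet_eq_pair hN).2 (.inr rfl)
  have hva' := ofSimpleGraph_adj.1 hva
  have hvb' := ofSimpleGraph_adj.1 hvb
  refine ⟨a, b, hab, hN, ?_, fun hadj ↦ hG.triangle hva hadj hvb.symm ?_, ?_, ?_⟩
  · rw [ofSimpleGraph_label hva', ofSimpleGraph_label hvb']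
  · rw [ofSimpleGraph_label hva', ofSimpleGraph_label (ofSimpleGraph_adj.1 hadj),
      ofSimpleGraph_label hvb'.symm]
    decide
  · exact (ofSimpleGraph_degree G a).symm ▸ h a hva'
  · exact (ofSimpleGraph_degree G b).symm ▸ h b hvb'

end OfSimpleGraph

section TwoConnected

variable [Fintype V] {G : SimpleGraph V} {v w : V}

theorem exists_adj_ne_of_reachable (hcard : 3 ≤ Fintype.card V)
    (h : ∀ v a b, a ≠ v → b ≠ v → (G.deleteIncidenceSet v).Reachable a b) (hvw : v ≠ w) :
    ∃ u, G.Adj v u ∧ u ≠ w := by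
  obtain ⟨b, hbv, hbw⟩ : ∃ b, b ≠ v ∧ b ≠ w := by
    classical
    obtain ⟨b, -, hb⟩ := Finset.exists_mem_notMem_of_card_lt_card
      (s := {v, w}) (t := Finset.univ) (Finset.card_le_two.trans_lt hcard)
    exact ⟨b, by simpa using hb⟩
  obtain ⟨p⟩ := h w v b hvw hbw
  obtain ⟨hadj, -, hw⟩ :=
    G.deleteIncidenceSet_adj.1 (p.adj_snd (SimpleGraph.Walk.not_nil_of_ne hbv.symm))
  exact ⟨p.snd, hadj, hw⟩

variable [DecidableRel G.Adj]

theorem two_le_degree_of_reachable (hcard : 3 ≤ Fintype.card V)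
    (h : ∀ v a b, a ≠ v → b ≠ v → (G.deleteIncidenceSet v).Reachable a b) (v : V) :
    2 ≤ G.degree v := by
  have : Nontrivial V := Fintype.one_lt_card_iff_nontrivial.1 (by lia)
  obtain ⟨w, hw⟩ := exists_ne v
  obtain ⟨a, hva, -⟩ := exists_adj_ne_of_reachable hcard h hw.symm
  obtain ⟨b, hvb, hba⟩ := exists_adj_ne_of_reachable hcard h hva.ne
  rw [← G.card_neighborFinset_eq_degree]
  exact Finset.one_lt_card.2 ⟨a, by simpa, b, by simpa, hba.symm⟩

theorem admissible_ofSimpleGraph (hcard : 3 ≤ Fintype.card V)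
    (h : ∀ v a b, a ≠ v → b ≠ v → (G.deleteIncidenceSet v).Reachable a b)
    (hcycle : ¬∃ (u : V) (c : G.Walk u u), c.IsCycle ∧ 3 ∣ c.length)
    (hadj : ∀ u v, G.degree u = 2 → G.degree v = 2 → ¬G.Adj u v)
    (htwins : ∀ u v, u ≠ v → G.degree u = 2 → G.degree v = 2 →
      G.neighborSet u ≠ G.neighborSet v) :
    (ofSimpleGraph G).Admissible where
  zeroCycleFree := zeroCycleFree_ofSimpleGraph hcycle
  isTwoConnected := isTwoConnected_ofSimpleGraph h
  support_nonempty := by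
    obtain ⟨v⟩ : Nonempty V := Fintype.card_pos_iff.1 (by lia)
    have hv := two_le_degree_of_reachable hcard h v
    obtain ⟨u, hu⟩ := (G.degree_pos_iff_exists_adj v).1 (two_pos.trans_le hv)
    exact ⟨v, u, ofSimpleGraph_adj.2 hu⟩
  degree_or_isSuppressible v _ := by
    have htwo := two_le_degree_of_reachable hcard h
    rw [ofSimpleGraph_degree]
    obtain hv | hv := (htwo v).eq_or_lt
    · refine .inr <| (zeroCycleFree_ofSimpleGraph hcycle).exists_isSuppressible hv.symm
        fun u hu ↦ (htwo u).lt_of_ne fun hu' ↦ hadj v u hv.symm hu'.symm hu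
    · exact .inl hv
  eq_of_neighborSet_eq u v hu hN := by
    by_contra hne
    have hv : (ofSimpleGraph G).degree v = 2 := by rwa [degree, ← hN]
    rw [ofSimpleGraph_degree] at hu hv
    simp only [ofSimpleGraph_neighborSet] at hN
    exact htwins u v hne hu hv hN

end TwoConnected

end LabelledGraph

/-- Gauthier's structure theorem: every 2-connected graph with no cycle of length
divisible by 3 contains either two adjacent degree-2 vertices or two degree-2 vertices
with the same neighbourhood (2-twins).  Equivalently, a 2-connected graph containing
no two adjacent degree-2 vertices and no 2-twins has a cycle of length divisible
by 3. -/
theorem stmt_19 {V : Type*} [Fintype V] [DecidableEq V] (G : SimpleGraph V)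
    [DecidableRel G.Adj]
    (h2conn : 3 ≤ Fintype.card V ∧
      ∀ v a b : V, a ≠ v → b ≠ v →
        (SimpleGraph.fromRel fun c d => G.Adj c d ∧ c ≠ v ∧ d ≠ v).Reachable a b)
    (hno : ¬ ∃ (u : V) (c : G.Walk u u), c.IsCycle ∧ 3 ∣ c.length) :
    (∃ u v : V, G.degree u = 2 ∧ G.degree v = 2 ∧ G.Adj u v) ∨
    (∃ u v : V, u ≠ v ∧ G.degree u = 2 ∧ G.degree v = 2 ∧
      G.neighborSet u = G.neighborSet v) := by
  have hdelete (v : V) : SimpleGraph.fromRel (fun c d => G.Adj c d ∧ c ≠ v ∧ d ≠ v) =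
      G.deleteIncidenceSet v := by
    ext a b
    rw [SimpleGraph.fromRel_adj, SimpleGraph.deleteIncidenceSet_adj]
    have := G.adj_comm a b
    have := G.ne_of_adj (a := a) (b := b)
    tauto
  obtain ⟨hcard, hreach⟩ := h2conn
  simp only [hdelete] at hreach
  by_contra! h
  exact LabelledGraph.not_admissible
    (LabelledGraph.admissible_ofSimpleGraph hcard hreach hno h.1 h.2)
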